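/- arXiv:1506.02517 — 13 statements merged into one kernel-verified Lean document; each statement's English description precedes it below -/
import Mathlib

section
/- Let n ≥ 1 and q ≥ 1 be integers, let p be a real number with 1 ≤ p < ∞, and let x, y ∈ ℤ^n. Then the p-Lee distance between the reductions of x and y modulo q equals the distance induced on (ℤ/qℤ)^n by the ℓ_p distance on ℤ^n: (∑_{i=1}^n d_Lee(x̄_i, ȳ_i)^p)^{1/p} = inf { d_p(x + q·t, y + q·w) : t, w ∈ ℤ^n }, and this infimum is attained. -/
open Finset

/-- The `ℓ_p` distance on `ℤ^n` for a real parameter `p`. -/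
noncomputable def dp (n : ℕ) (p : ℝ) (x y : Fin n → ℤ) : ℝ :=
  (∑ i, (|x i - y i| : ℝ) ^ p) ^ (1 / p)

/-- The Lee distance on `ℤ/qℤ`. -/
def dLee {q : ℕ} (x y : ZMod q) : ℕ := min (x - y).val (y - x).val

/-- The `p`-Lee distance on `(ℤ/qℤ)^n`. -/
noncomputable def dpLee (n q : ℕ) (p : ℝ) (x y : Fin n → ZMod q) : ℝ :=
  (∑ i, (dLee (x i) (y i) : ℝ) ^ p) ^ (1 / p)

theorem coe_dLee_intCast {q : ℕ} (hq : 1 ≤ q) (a b : ℤ) :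
    (dLee (a : ZMod q) (b : ZMod q) : ℤ) = min ((a - b) % q) ((b - a) % q) := by
  have : NeZero q := ⟨by omega⟩
  rw [dLee, ← Int.cast_sub, ← Int.cast_sub, Nat.cast_min, ZMod.val_intCast, ZMod.val_intCast]

theorem emod_natCast_le {a : ℤ} (ha : 0 ≤ a) (q : ℕ) : a % q ≤ a := by
  lift a to ℕ using ha
  exact_mod_cast Nat.mod_le a q

/-- The Lee distance between residue classes is at most the distance between representatives. -/
theorem dLee_intCast_le {q : ℕ} (hq : 1 ≤ q) (a b : ℤ) :
    (dLee (a : ZMod q) (b : ZMod q) : ℤ) ≤ |a - b| := by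
  rw [coe_dLee_intCast hq]
  rcases le_total b a with h | h
  · rw [abs_of_nonneg (by omega)]
    exact (min_le_left _ _).trans (emod_natCast_le (by omega) q)
  · rw [abs_of_nonpos (by omega), neg_sub]
    exact (min_le_right _ _).trans (emod_natCast_le (by omega) q)

/-- The Lee distance between residue classes is attained by shifting one representative. -/
theorem exists_dLee_intCast_eq {q : ℕ} (hq : 1 ≤ q) (a b : ℤ) :
    ∃ t : ℤ, (dLee (a : ZMod q) (b : ZMod q) : ℤ) = |a + q * t - b| := by
  have hq0 : (q : ℤ) ≠ 0 := by omega
  rw [coe_dLee_intCast hq]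
  rcases min_choice ((a - b) % (q : ℤ)) ((b - a) % (q : ℤ)) with h | h
  · refine ⟨-((a - b) / q), ?_⟩
    rw [h, ← abs_of_nonneg (Int.emod_nonneg (a - b) hq0), Int.emod_def]
    congr 1
    ring
  · refine ⟨(b - a) / q, ?_⟩
    rw [h, ← abs_of_nonneg (Int.emod_nonneg (b - a) hq0), Int.emod_def, ← abs_neg]
    congr 1
    ring

/-- The `p`-Lee distance between the reductions of `x, y ∈ ℤ^n` modulo `q` equals the
distance induced on `(ℤ/qℤ)^n` by the `ℓ_p` distance on `ℤ^n`, and the infimum defining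
the induced distance is attained. -/
theorem pLee_eq_induced (n q : ℕ) (hn : 1 ≤ n) (hq : 1 ≤ q) (p : ℝ) (hp : 1 ≤ p)
    (x y : Fin n → ℤ) :
    IsLeast {d : ℝ | ∃ t w : Fin n → ℤ,
        d = dp n p (fun i => x i + q * t i) (fun i => y i + q * w i)}
      (dpLee n q p (fun i => (x i : ZMod q)) (fun i => (y i : ZMod q))) := by
  constructor
  · choose t ht using fun i => exists_dLee_intCast_eq hq (x i) (y i)
    refine ⟨t, 0, ?_⟩
    unfold dpLee dp
    congr 1
    refine Finset.sum_congr rfl fun i _ => ?_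
    congr 1
    simpa using congrArg (Int.cast : ℤ → ℝ) (ht i)
  · rintro _ ⟨t, w, rfl⟩
    unfold dpLee dp
    have hp0 : 0 ≤ p := by linarith
    gcongr with i
    have h := dLee_intCast_le hq (x i + q * t i) (y i + q * w i)
    simp only [Int.cast_add, Int.cast_mul, Int.cast_natCast,
      ZMod.natCast_self, zero_mul, add_zero] at h
    exact_mod_cast h
end

section
/- Let q ≥ 2 and n ≥ 1 be integers, let p be a real number with 1 ≤ p < ∞, let C ⊆ (ℤ/qℤ)^n be a code, and let r be a real number with 0 ≤ 2r < q. Then the balls of radius r in the p-Lee metric centered at distinct points of C are pairwise disjoint if and only if the balls of radius r in the ℓ_p metric centered at distinct points of the Construction A lattice Λ(C) ⊆ ℤ^n are pairwise disjoint. -/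
open Finset

/-- The Construction A lattice of a code `C ⊆ (ℤ/qℤ)^n`: the preimage of `C` under
coordinatewise reduction modulo `q`. -/
def constructionA (n q : ℕ) (C : Set (Fin n → ZMod q)) : Set (Fin n → ℤ) :=
  {x | (fun i => (x i : ZMod q)) ∈ C}

/-- Reduction modulo `q` does not increase distances. -/
lemma dLee_intCast_le_abs {q : ℕ} [NeZero q] (a b : ℤ) :
    (dLee (a : ZMod q) (b : ZMod q) : ℤ) ≤ |a - b| := by
  have hval : ∀ c : ℤ, 0 ≤ c → ((c : ZMod q).val : ℤ) ≤ c := fun c hc => by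
    rw [ZMod.val_intCast]
    lift c to ℕ using hc
    exact_mod_cast Nat.mod_le c q
  unfold dLee
  rw [← Int.cast_sub, ← Int.cast_sub]
  rcases le_total 0 (a - b) with h | h
  · rw [abs_of_nonneg h]
    exact (Int.ofNat_le.mpr (min_le_left _ _)).trans (hval (a - b) h)
  · rw [abs_of_nonpos h, neg_sub]
    exact (Int.ofNat_le.mpr (min_le_right _ _)).trans (hval (b - a) (by linarith))

/-- Every residue class has a representative realizing its Lee distance to a given integer. -/
lemma exists_intCast_eq_abs_sub_eq_dLee {q : ℕ} [NeZero q] (a : ℤ) (x : ZMod q) :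
    ∃ b : ℤ, (b : ZMod q) = x ∧ |a - b| = (dLee (a : ZMod q) x : ℤ) := by
  unfold dLee
  rcases min_choice ((a : ZMod q) - x).val (x - (a : ZMod q)).val with h | h
  · exact ⟨a - ((a : ZMod q) - x).val, by simp, by simp [h, -ZMod.natCast_val]⟩
  · exact ⟨a + (x - (a : ZMod q)).val, by simp, by simp [h, -ZMod.natCast_val]⟩

lemma dpLee_intCast_le_dp {n q : ℕ} [NeZero q] {p : ℝ} (hp : 0 ≤ p) (x y : Fin n → ℤ) :
    dpLee n q p (fun i => (x i : ZMod q)) (fun i => (y i : ZMod q)) ≤ dp n p x y := by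
  unfold dpLee dp
  gcongr with i
  exact_mod_cast dLee_intCast_le_abs (q := q) (x i) (y i)

lemma exists_lift_dp_eq_dpLee {n q : ℕ} [NeZero q] (p : ℝ) (z : Fin n → ℤ)
    (x : Fin n → ZMod q) :
    ∃ w : Fin n → ℤ, (fun i => (w i : ZMod q)) = x ∧
      dp n p z w = dpLee n q p (fun i => (z i : ZMod q)) x := by
  choose w hw hd using fun i => exists_intCast_eq_abs_sub_eq_dLee (z i) (x i)
  refine ⟨w, funext hw, ?_⟩
  unfold dp dpLee
  congr 1
  refine sum_congr rfl fun i _ => ?_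
  congr 1
  exact_mod_cast hd i

lemma abs_sub_le_dp {n : ℕ} {p : ℝ} (hp : 0 < p) (x y : Fin n → ℤ) (i : Fin n) :
    |(x i : ℝ) - y i| ≤ dp n p x y := by
  unfold dp
  rw [one_div, Real.le_rpow_inv_iff_of_pos (abs_nonneg _) (by positivity) hp]
  exact single_le_sum (f := fun i => |(x i : ℝ) - y i| ^ p) (fun j _ => by positivity)
    (mem_univ i)

/-- Distinct integers in the same residue class modulo `q` are at distance at least `q`. -/
lemma le_abs_sub_of_intCast_eq {q : ℕ} {a b : ℤ} (h : (a : ZMod q) = b) (hab : a ≠ b) :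
    (q : ℤ) ≤ |a - b| := by
  refine Int.le_of_dvd (abs_pos.mpr (sub_ne_zero.mpr hab)) ((dvd_abs _ _).mpr ?_)
  exact (ZMod.intCast_eq_intCast_iff_dvd_sub b a q).mp h.symm

/-- For `0 ≤ 2r < q`, the balls of radius `r` in the `p`-Lee metric centered at distinct
points of a code `C ⊆ (ℤ/qℤ)^n` are pairwise disjoint iff the balls of radius `r` in the
`ℓ_p` metric centered at distinct points of the Construction A lattice `Λ(C) ⊆ ℤ^n` are
pairwise disjoint. -/
theorem disjoint_balls_iff (n q : ℕ) (hn : 1 ≤ n) (hq : 2 ≤ q) (p : ℝ) (hp : 1 ≤ p)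
    (C : Set (Fin n → ZMod q)) (r : ℝ) (hr : 0 ≤ r) (hrq : 2 * r < q) :
    (∀ x ∈ C, ∀ y ∈ C, x ≠ y →
        Disjoint {z : Fin n → ZMod q | dpLee n q p z x ≤ r}
                 {z : Fin n → ZMod q | dpLee n q p z y ≤ r}) ↔
    (∀ x ∈ constructionA n q C, ∀ y ∈ constructionA n q C, x ≠ y →
        Disjoint {z : Fin n → ℤ | dp n p z x ≤ r}
                 {z : Fin n → ℤ | dp n p z y ≤ r}) := by
  have : NeZero q := ⟨by omega⟩
  have hp0 : 0 < p := by linarith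
  simp only [Set.disjoint_left, Set.mem_ofPred_eq]
  constructor
  · intro H x hx y hy hxy z hzx hzy
    by_cases hred : (fun i => (x i : ZMod q)) = fun i => (y i : ZMod q)
    · obtain ⟨i, hi⟩ := Function.ne_iff.mp hxy
      have hq_le : (q : ℝ) ≤ |(x i : ℝ) - y i| := by
        exact_mod_cast le_abs_sub_of_intCast_eq (congrFun hred i) hi
      have hx_le := (abs_sub_le_dp hp0 z x i).trans hzx
      have hy_le := (abs_sub_le_dp hp0 z y i).trans hzy
      have htri := abs_sub_le (x i : ℝ) (z i) (y i)
      rw [abs_sub_comm (x i : ℝ) (z i)] at htri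
      linarith
    · exact H _ hx _ hy hred ((dpLee_intCast_le_dp hp0.le z x).trans hzx)
        ((dpLee_intCast_le_dp hp0.le z y).trans hzy)
  · intro H x hx y hy hxy z hzx hzy
    choose w hw using fun i => ZMod.intCast_surjective (z i)
    obtain rfl : (fun i => (w i : ZMod q)) = z := funext hw
    obtain ⟨u, rfl, hu⟩ := exists_lift_dp_eq_dpLee p w x
    obtain ⟨v, rfl, hv⟩ := exists_lift_dp_eq_dpLee p w y
    exact H u hx v hy (fun h => hxy (by rw [h])) (hu.trans_le hzx) (hv.trans_le hzy)
end

section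
/- Let n ≥ 1 and q ≥ 2 be integers. There exist an integer r ≥ 1 and a code C ⊆ (ℤ/qℤ)^n with at least two elements such that every point of (ℤ/qℤ)^n lies within ∞-Lee distance r of exactly one codeword of C (a non-trivial r-perfect code in the ℓ_∞ metric) if and only if q = b·m for some odd integer b > 1 and some integer m > 1. -/
open Finset

/-- The `∞`-Lee distance on `(ℤ/qℤ)^n`. -/
def dInfLee {n q : ℕ} (x y : Fin n → ZMod q) : ℕ :=
  Finset.univ.sup fun i => dLee (x i) (y i)

theorem dInfLee_le_iff {n q : ℕ} (x y : Fin n → ZMod q) (r : ℕ) :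
    dInfLee x y ≤ r ↔ ∀ i, dLee (x i) (y i) ≤ r := by
  simp [dInfLee, Finset.sup_le_iff]

/-- A Lee ball of radius `r` is the interval `[y - r, y + r]`. -/
theorem dLee_le_iff {q r : ℕ} [NeZero q] (hr : 2 * r + 1 ≤ q) (x y : ZMod q) :
    dLee x y ≤ r ↔ (x - y + (r : ZMod q)).val < 2 * r + 1 := by
  unfold dLee
  rw [← neg_sub x y]
  generalize x - y = w
  have hw := ZMod.val_lt w
  rw [ZMod.neg_val, ZMod.val_add, ZMod.val_natCast_of_lt (by omega : r < q)]
  rcases lt_or_ge (w.val + r) q with h | h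
  · rw [Nat.mod_eq_of_lt h]
    split_ifs with h0
    · simp [h0]; omega
    · omega
  · rw [Nat.mod_eq_sub_mod h, Nat.mod_eq_of_lt (by omega)]
    split_ifs with h0
    · simp [h0] at h; omega
    · omega

theorem card_dLee_le {q r : ℕ} [NeZero q] (hr : 2 * r + 1 ≤ q) (y : ZMod q) :
    (univ.filter fun x : ZMod q => dLee x y ≤ r).card = 2 * r + 1 := by
  rw [← Finset.card_range (2 * r + 1)]
  refine Finset.card_bij (fun x _ => (x - y + (r : ZMod q)).val) ?_ ?_ ?_
  · intro x hx
    simpa [dLee_le_iff hr] using hx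
  · intro x _ x' _ h
    simpa using ZMod.val_injective q h
  · intro k hk
    have hk : k < 2 * r + 1 := by simpa using hk
    have hval : ((k : ZMod q) - r + y - y + r).val = k := by
      rw [add_sub_cancel_right, sub_add_cancel, ZMod.val_natCast_of_lt (by omega)]
    refine ⟨(k : ZMod q) - r + y, ?_, hval⟩
    simp only [mem_filter, mem_univ, true_and]
    rw [dLee_le_iff hr, hval]
    exact hk

theorem card_dInfLee_le {n q r : ℕ} [NeZero q] (hr : 2 * r + 1 ≤ q) (y : Fin n → ZMod q) :
    (univ.filter fun x : Fin n → ZMod q => dInfLee x y ≤ r).card = (2 * r + 1) ^ n := by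
  have : (univ.filter fun x : Fin n → ZMod q => dInfLee x y ≤ r) =
      Fintype.piFinset fun i => univ.filter fun x : ZMod q => dLee x (y i) ≤ r := by
    ext x
    simp [dInfLee_le_iff]
  rw [this, Fintype.card_piFinset]
  simp [card_dLee_le hr]

theorem dLee_le_of_le {q r : ℕ} [NeZero q] (hr : q ≤ 2 * r + 1) (x y : ZMod q) :
    dLee x y ≤ r := by
  unfold dLee
  rw [← neg_sub x y]
  generalize x - y = w
  have hw := ZMod.val_lt w
  rw [ZMod.neg_val]
  split_ifs <;> omega

/-- The sphere-packing condition for perfect codes in the `∞`-Lee metric. -/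
theorem pow_dvd_pow_of_perfect {n q r : ℕ} [NeZero q] (hr : 2 * r + 1 ≤ q)
    {C : Set (Fin n → ZMod q)} (hC : ∀ z : Fin n → ZMod q, ∃! c, c ∈ C ∧ dInfLee z c ≤ r) :
    (2 * r + 1) ^ n ∣ q ^ n := by
  classical
  choose f hf huniq using hC
  have hcard : (univ : Finset (Fin n → ZMod q)).card =
      ∑ c ∈ univ.filter (· ∈ C), (univ.filter fun z => f z = c).card :=
    Finset.card_eq_sum_card_fiberwise fun z _ => by simpa using (hf z).1
  have hfib : ∀ c ∈ univ.filter (· ∈ C),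
      (univ.filter fun z => f z = c).card = (2 * r + 1) ^ n := by
    intro c hc
    rw [← card_dInfLee_le hr c]
    congr 1
    ext z
    simp only [mem_filter, mem_univ, true_and] at hc ⊢
    exact ⟨fun h => h ▸ (hf z).2, fun h => (huniq z c ⟨hc, h⟩).symm⟩
  rw [Finset.sum_congr rfl hfib, Finset.sum_const, smul_eq_mul] at hcard
  have hq : (univ : Finset (Fin n → ZMod q)).card = q ^ n := by simp [ZMod.card]
  exact ⟨_, by rw [← hq, hcard, mul_comm]⟩

/-- The multiples of `2 * r + 1` form an `r`-perfect code in `ℤ/qℤ` when `2 * r + 1 ∣ q`. -/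
theorem existsUnique_castHom_eq_zero {q r : ℕ} [NeZero q] (hb : 2 * r + 1 ∣ q) (z : ZMod q) :
    ∃! c : ZMod q, ZMod.castHom hb (ZMod (2 * r + 1)) c = 0 ∧ dLee z c ≤ r := by
  have hr : 2 * r + 1 ≤ q := Nat.le_of_dvd (NeZero.pos q) hb
  simp only [dLee_le_iff hr]
  set φ := ZMod.castHom hb (ZMod (2 * r + 1))
  set t : ℕ := (φ (z + r)).val with ht
  have htlt : t < 2 * r + 1 := ZMod.val_lt _
  refine ⟨z + r - t, ⟨?_, ?_⟩, ?_⟩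
  · rw [map_sub, map_natCast, ht, ZMod.natCast_zmod_val, sub_self]
  · have : z - (z + r - t) + r = (t : ZMod q) := by ring
    rw [this, ZMod.val_natCast_of_lt (by omega)]
    exact htlt
  · rintro c ⟨hc, hlt⟩
    set s := (z - c + (r : ZMod q)).val with hs
    have hsq : (s : ZMod q) = z - c + r := ZMod.natCast_zmod_val _
    have hst : s = t := by
      have h : φ (z + r) = (s : ZMod (2 * r + 1)) := by
        rw [← map_natCast φ, hsq, map_add, map_add, map_sub, hc, sub_zero]
      rw [ht, h, ZMod.val_natCast_of_lt hlt]
    rw [← hst, hsq]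
    ring

/-- There exists a non-trivial `r`-perfect code in `(ℤ/qℤ)^n` in the `ℓ_∞` metric iff
`q = b·m` with `b > 1` odd and `m > 1`. -/
theorem exists_nontrivial_perfect_linf_iff (n q : ℕ) (hn : 1 ≤ n) (hq : 2 ≤ q) :
    (∃ (r : ℕ) (C : Set (Fin n → ZMod q)), 1 ≤ r ∧ C.Nontrivial ∧
        ∀ z : Fin n → ZMod q, ∃! c, c ∈ C ∧ dInfLee z c ≤ r) ↔
    ∃ b m : ℕ, Odd b ∧ 1 < b ∧ 1 < m ∧ q = b * m := by
  have : NeZero q := ⟨by omega⟩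
  constructor
  · rintro ⟨r, C, hr, hnt, hC⟩
    have hlt : 2 * r + 1 < q := by
      by_contra! hle
      obtain ⟨c, hc, d, hd, hne⟩ := hnt
      have hall : ∀ y : Fin n → ZMod q, dInfLee c y ≤ r := fun y =>
        (dInfLee_le_iff _ _ _).2 fun i => dLee_le_of_le hle _ _
      exact hne ((hC c).unique ⟨hc, hall c⟩ ⟨hd, hall d⟩)
    obtain ⟨m, hm⟩ := (Nat.pow_dvd_pow_iff (by omega)).1 (pow_dvd_pow_of_perfect hlt.le hC)
    exact ⟨2 * r + 1, m, ⟨r, rfl⟩, by omega, by nlinarith, hm⟩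
  · rintro ⟨b, m, ⟨r, rfl⟩, hb, hm, hqm⟩
    have hdvd : 2 * r + 1 ∣ q := ⟨m, hqm⟩
    have hlt : 2 * r + 1 < q := by nlinarith
    refine ⟨r, {c | ∀ i, ZMod.castHom hdvd (ZMod (2 * r + 1)) (c i) = 0}, by omega,
      ⟨0, fun _ => map_zero _, fun _ => ((2 * r + 1 : ℕ) : ZMod q), fun _ => ?_, fun h => ?_⟩,
      fun z => ?_⟩
    · rw [map_natCast, ZMod.natCast_self]
    · have h0 : ((2 * r + 1 : ℕ) : ZMod q) = 0 := (congrFun h ⟨0, hn⟩).symm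
      rw [ZMod.natCast_eq_zero_iff] at h0
      exact absurd (Nat.le_of_dvd (by omega) h0) (by omega)
    · choose c hc huniq using fun i => existsUnique_castHom_eq_zero hdvd (z i)
      refine ⟨c, ⟨fun i => (hc i).1, (dInfLee_le_iff _ _ _).2 fun i => (hc i).2⟩, ?_⟩
      rintro d ⟨hd, hzd⟩
      exact funext fun i => huniq i (d i) ⟨hd i, (dInfLee_le_iff _ _ _).1 hzd i⟩
end

section
/- Let n ≥ 1 and r ≥ 1 be integers and let p be a real number with 1 ≤ p < ∞ such that n·r^p < (r+1)^p. Then B_p^n(n^{1/p}·r) = B_∞^n(r); that is, {x ∈ ℤ^n : ∑_{i=1}^n |x_i|^p ≤ n·r^p} = {x ∈ ℤ^n : max_{1≤i≤n} |x_i| ≤ r}. -/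
open Finset

/-- If `n·r^p < (r+1)^p` for an integer `r ≥ 1`, then the `ℓ_p` ball of radius
`n^{1/p}·r` in `ℤ^n` coincides with the `ℓ_∞` ball of radius `r`. -/
theorem ball_p_eq_ball_inf (n : ℕ) (hn : 1 ≤ n) (r : ℤ) (hr : 1 ≤ r)
    (p : ℝ) (hp : 1 ≤ p) (h : (n : ℝ) * (r : ℝ) ^ p < ((r : ℝ) + 1) ^ p) :
    {x : Fin n → ℤ | ∑ i, (|x i| : ℝ) ^ p ≤ (n : ℝ) * (r : ℝ) ^ p} =
    {x : Fin n → ℤ | ∀ i, |x i| ≤ r} := by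
  have hp0 : 0 ≤ p := by linarith
  have hr1 : (1 : ℝ) ≤ r := by exact_mod_cast hr
  ext x
  simp only [Set.mem_ofPred_eq]
  constructor
  · intro hx i
    by_contra! hi
    have hi' : (r : ℝ) + 1 ≤ |(x i : ℝ)| := by exact_mod_cast hi
    have hpow : ((r : ℝ) + 1) ^ p ≤ |(x i : ℝ)| ^ p :=
      Real.rpow_le_rpow (by linarith) hi' hp0
    have hsum : |(x i : ℝ)| ^ p ≤ ∑ j, |(x j : ℝ)| ^ p :=
      Finset.single_le_sum (f := fun j => |(x j : ℝ)| ^ p)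
        (fun j _ => Real.rpow_nonneg (abs_nonneg _) p) (Finset.mem_univ i)
    linarith
  · intro hx
    calc ∑ i, |(x i : ℝ)| ^ p ≤ ∑ _i : Fin n, (r : ℝ) ^ p :=
          Finset.sum_le_sum fun i _ =>
            Real.rpow_le_rpow (abs_nonneg _) (by exact_mod_cast hx i) hp0
      _ = n * (r : ℝ) ^ p := by simp
end

section
/- Let n ≥ 2 and r ≥ 1 be integers and let p be a real number with p > log(n)/log(1 + 1/r). If C ⊆ ℤ^n is an r-perfect code in the ℓ_∞ metric (the translates c + B_∞^n(r), c ∈ C, partition ℤ^n), then C is an (n^{1/p}·r)-perfect code in the ℓ_p metric (the translates c + B_p^n(n^{1/p}·r), c ∈ C, partition ℤ^n). In particular, since the subgroup (2r+1)ℤ^n is an r-perfect code in the ℓ_∞ metric, perfect codes in ℤ^n in the ℓ_p metric with radius n^{1/p}·r exist whenever p > log(n)/log(1 + 1/r). -/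
open Finset

/-- The bound `p > log n / log (1 + 1/r)` in multiplicative form. -/
theorem natCast_mul_rpow_lt_succ_rpow {n r : ℕ} (hn : 1 ≤ n) (hr : 1 ≤ r) {p : ℝ}
    (hp : Real.log n / Real.log (1 + 1 / (r : ℝ)) < p) :
    (n : ℝ) * (r : ℝ) ^ p < ((r : ℝ) + 1) ^ p := by
  have hr0 : (0 : ℝ) < r := by exact_mod_cast hr
  have hn0 : (0 : ℝ) < n := by exact_mod_cast hn
  have hinv : 0 < 1 / (r : ℝ) := by positivity
  have hlog : 0 < Real.log (1 + 1 / (r : ℝ)) := Real.log_pos (by linarith)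
  have hlt : (n : ℝ) < (1 + 1 / (r : ℝ)) ^ p := by
    rw [← Real.log_lt_log_iff hn0 (by positivity), Real.log_rpow (by positivity)]
    exact (div_lt_iff₀ hlog).1 hp
  have hsplit : (r : ℝ) + 1 = (1 + 1 / (r : ℝ)) * r := by field_simp
  rw [hsplit, Real.mul_rpow (by positivity) hr0.le]
  exact mul_lt_mul_of_pos_right hlt (by positivity)

/-- When `n * r ^ p < (r + 1) ^ p`, the `ℓ_p` ball of radius `n ^ (1 / p) * r` in `ℤ^n` is the
`ℓ_∞` ball of radius `r`. -/
theorem dp_le_iff_forall_abs_sub_le {n r : ℕ} {p : ℝ} (hp : 0 < p)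
    (hlt : (n : ℝ) * (r : ℝ) ^ p < ((r : ℝ) + 1) ^ p) (z c : Fin n → ℤ) :
    dp n p z c ≤ (n : ℝ) ^ (1 / p) * r ↔ ∀ i, |z i - c i| ≤ (r : ℤ) := by
  have hr0 : (0 : ℝ) ≤ r := r.cast_nonneg
  have hnonneg : ∀ i, 0 ≤ |(z i : ℝ) - c i| ^ p := fun i => by positivity
  have hradius : (n : ℝ) ^ (1 / p) * r = ((n : ℝ) * (r : ℝ) ^ p) ^ (1 / p) := by
    rw [Real.mul_rpow (by positivity) (by positivity), ← Real.rpow_mul hr0,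
      mul_one_div_cancel hp.ne', Real.rpow_one]
  rw [dp, hradius, Real.rpow_le_rpow_iff (Finset.sum_nonneg fun i _ => hnonneg i)
    (by positivity) (by positivity)]
  constructor
  · intro hsum i
    by_contra! hi
    have hi' : (r : ℝ) + 1 ≤ |(z i : ℝ) - c i| := by exact_mod_cast Int.add_one_le_of_lt hi
    have hpow := Real.rpow_le_rpow (by positivity) hi' hp.le
    have hterm := Finset.single_le_sum (fun j _ => hnonneg j) (Finset.mem_univ i)
    linarith
  · intro h
    calc ∑ i, |(z i : ℝ) - c i| ^ p ≤ ∑ _i : Fin n, (r : ℝ) ^ p :=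
          Finset.sum_le_sum fun i _ =>
            Real.rpow_le_rpow (abs_nonneg _) (by exact_mod_cast h i) hp.le
      _ = n * (r : ℝ) ^ p := by simp

/-- The lattice `(2r+1)ℤ^n` is an `r`-perfect code in the `ℓ_∞` metric. -/
theorem existsUnique_dvd_forall_abs_sub_le (n r : ℕ) (z : Fin n → ℤ) :
    ∃! c : Fin n → ℤ, c ∈ {c : Fin n → ℤ | ∀ i, (2 * (r : ℤ) + 1) ∣ c i} ∧
      ∀ i, |z i - c i| ≤ (r : ℤ) := by
  have hpos : (0 : ℤ) < 2 * r + 1 := by positivity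
  refine ⟨fun i => (2 * (r : ℤ) + 1) * ((z i + r) / (2 * r + 1)),
    ⟨fun i => dvd_mul_right _ _, fun i => ?_⟩, ?_⟩
  · have hdiv := Int.mul_ediv_add_emod (z i + r) (2 * r + 1)
    have hmod_nonneg := Int.emod_nonneg (z i + r) hpos.ne'
    have hmod_lt := Int.emod_lt_of_pos (z i + r) hpos
    rw [abs_le]
    constructor <;> linarith
  · rintro c ⟨hc, hball⟩
    funext i
    obtain ⟨k, hk⟩ := hc i
    have hi := abs_le.1 (hball i)
    have hquot : (z i + r) / (2 * r + 1) = k := by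
      rw [Int.ediv_eq_iff_of_pos hpos]
      constructor <;> linarith
    rw [hk, hquot]

/-- If `p > log(n)/log(1 + 1/r)`, then every `r`-perfect code in `ℤ^n` in the `ℓ_∞`
metric is an `n^{1/p}·r`-perfect code in the `ℓ_p` metric; in particular (since
`(2r+1)ℤ^n` is `r`-perfect in the `ℓ_∞` metric) perfect codes in the `ℓ_p` metric with
radius `n^{1/p}·r` exist under this condition. -/
theorem perfect_inf_is_perfect_p (n : ℕ) (hn : 2 ≤ n) (r : ℕ) (hr : 1 ≤ r) (p : ℝ)
    (hp : Real.log n / Real.log (1 + 1 / (r : ℝ)) < p) :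
    (∀ C : Set (Fin n → ℤ),
        (∀ z : Fin n → ℤ, ∃! c, c ∈ C ∧ ∀ i, |z i - c i| ≤ (r : ℤ)) →
        (∀ z : Fin n → ℤ, ∃! c, c ∈ C ∧ dp n p z c ≤ (n : ℝ) ^ (1 / p) * r)) ∧
    (∃ C : Set (Fin n → ℤ),
        ∀ z : Fin n → ℤ, ∃! c, c ∈ C ∧ dp n p z c ≤ (n : ℝ) ^ (1 / p) * r) := by
  have hlt := natCast_mul_rpow_lt_succ_rpow (by omega) hr hp
  have hp0 : 0 < p := by
    have hr0 : (0 : ℝ) < r := by exact_mod_cast hr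
    have hinv : 0 < 1 / (r : ℝ) := by positivity
    exact (div_nonneg (Real.log_natCast_nonneg n) (Real.log_nonneg (by linarith))).trans_lt hp
  simp only [dp_le_iff_forall_abs_sub_le hp0 hlt]
  exact ⟨fun _ h => h, _, existsUnique_dvd_forall_abs_sub_le n r⟩
end

section
/- Let n ≥ 1 be an integer and p a real number with 1 ≤ p < ∞. (i) For every x ∈ ℤ^n there exists y ∈ ℤ^n with d_p(y,0) ≤ d_p(x,0)/2 and d_p(x,y) ≤ d_p(x,0)/2 + n^{1/p}/2. (ii) Consequently, for every nontrivial additive subgroup Λ ⊆ ℤ^n: if R is a real number with R < d_p(Λ)/2, then the balls B_p^n(c,R), c ∈ Λ, are pairwise disjoint; and if R ≥ d_p(Λ)/2 + n^{1/p}/2, then there exist two distinct points of Λ whose balls of radius R intersect. -/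
open Finset

/-- The `ℓ_p` norm is monotone and subadditive: a coordinatewise bound on absolute values
yields the corresponding bound on norms. -/
lemma lp_le_add_of_abs_le {ι : Type*} [Fintype ι] {p : ℝ} (hp : 1 ≤ p) {f g h : ι → ℝ}
    (hf : ∀ i, |f i| ≤ |g i| + |h i|) :
    (∑ i, |f i| ^ p) ^ (1 / p) ≤ (∑ i, |g i| ^ p) ^ (1 / p) + (∑ i, |h i| ^ p) ^ (1 / p) := by
  have hmono : (∑ i, |f i| ^ p) ^ (1 / p) ≤ (∑ i, (|g i| + |h i|) ^ p) ^ (1 / p) := by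
    gcongr with i
    exact hf i
  exact hmono.trans (Real.Lp_add_le_of_nonneg univ hp (fun i _ => abs_nonneg _)
    (fun i _ => abs_nonneg _))

lemma lp_half {ι : Type*} [Fintype ι] {p : ℝ} (hp : 1 ≤ p) (f : ι → ℝ) :
    (∑ i, |f i / 2| ^ p) ^ (1 / p) = (∑ i, |f i| ^ p) ^ (1 / p) / 2 := by
  have hsum : ∑ i, |f i / 2| ^ p = (∑ i, |f i| ^ p) / 2 ^ p := by
    rw [Finset.sum_div]
    refine Finset.sum_congr rfl fun i _ => ?_
    rw [abs_div, abs_two, Real.div_rpow (abs_nonneg _) zero_le_two]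
  rw [hsum, Real.div_rpow (by positivity) (by positivity), one_div,
    Real.rpow_rpow_inv zero_le_two (by positivity)]

lemma dp_comm (n : ℕ) (p : ℝ) (x y : Fin n → ℤ) : dp n p x y = dp n p y x := by
  simp only [dp, abs_sub_comm]

lemma dp_sub_zero (n : ℕ) (p : ℝ) (x y : Fin n → ℤ) : dp n p (x - y) 0 = dp n p x y := by
  simp [dp]

lemma dp_triangle {n : ℕ} {p : ℝ} (hp : 1 ≤ p) (x y z : Fin n → ℤ) :
    dp n p x z ≤ dp n p x y + dp n p y z :=
  lp_le_add_of_abs_le hp fun _ => abs_sub_le _ _ _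

lemma abs_tdiv_two_le (a : ℤ) : |((a.tdiv 2 : ℤ) : ℝ)| ≤ |(a : ℝ) / 2| := by
  have h : 2 * |a.tdiv 2| ≤ |a| := by
    rw [Int.tdiv_eq_ediv, Int.sign_eq_one_of_pos two_pos]
    grind
  have h' : 2 * |((a.tdiv 2 : ℤ) : ℝ)| ≤ |(a : ℝ)| := by exact_mod_cast h
  rw [abs_div, abs_two]
  linarith

lemma abs_sub_tdiv_two_le (a : ℤ) :
    |(a : ℝ) - ((a.tdiv 2 : ℤ) : ℝ)| ≤ |(a : ℝ) / 2| + |(1 : ℝ) / 2| := by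
  have h : 2 * |a - a.tdiv 2| ≤ |a| + 1 := by
    rw [Int.tdiv_eq_ediv, Int.sign_eq_one_of_pos two_pos]
    grind
  have h' : 2 * |(a : ℝ) - ((a.tdiv 2 : ℤ) : ℝ)| ≤ |(a : ℝ)| + 1 := by exact_mod_cast h
  rw [abs_div, abs_div, abs_two, abs_one]
  linarith

/-- Halving each coordinate and rounding towards zero gives an approximate midpoint of `0`
and `x`. -/
lemma exists_approx_midpoint {n : ℕ} {p : ℝ} (hp : 1 ≤ p) (x : Fin n → ℤ) :
    ∃ y : Fin n → ℤ, dp n p y 0 ≤ dp n p x 0 / 2 ∧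
      dp n p x y ≤ dp n p x 0 / 2 + (n : ℝ) ^ (1 / p) / 2 := by
  have hx : dp n p x 0 / 2 = (∑ i, |(x i : ℝ) / 2| ^ p) ^ (1 / p) := by
    rw [lp_half hp]
    simp [dp]
  have hone : (n : ℝ) ^ (1 / p) / 2 = (∑ _i : Fin n, |(1 : ℝ) / 2| ^ p) ^ (1 / p) := by
    rw [lp_half hp (fun _ : Fin n => (1 : ℝ))]
    simp
  refine ⟨fun i => (x i).tdiv 2, ?_, ?_⟩
  · rw [hx, dp]
    gcongr (∑ i, ?_ ^ p) ^ (1 / p) with i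
    simpa using abs_tdiv_two_le (x i)
  · rw [hx, hone]
    exact lp_le_add_of_abs_le hp fun i => abs_sub_tdiv_two_le (x i)

/-- (i) Every `x ∈ ℤ^n` admits a point `y` with `d_p(y,0) ≤ d_p(x,0)/2` and
`d_p(x,y) ≤ d_p(x,0)/2 + n^{1/p}/2`. (ii) Consequently, for a nontrivial additive
subgroup `Λ ⊆ ℤ^n` with minimum `ℓ_p` distance `d`: if `R < d/2` the balls of radius `R`
centered at points of `Λ` are pairwise disjoint, while if `R ≥ d/2 + n^{1/p}/2` two
distinct such balls intersect. -/
theorem packing_radius_bounds (n : ℕ) (hn : 1 ≤ n) (p : ℝ) (hp : 1 ≤ p)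
    (Λ : AddSubgroup (Fin n → ℤ)) (hΛ : Λ ≠ ⊥) (d : ℝ)
    (hd : IsLeast {e : ℝ | ∃ x ∈ Λ, x ≠ 0 ∧ e = dp n p x 0} d) :
    (∀ x : Fin n → ℤ, ∃ y : Fin n → ℤ, dp n p y 0 ≤ dp n p x 0 / 2 ∧
        dp n p x y ≤ dp n p x 0 / 2 + (n : ℝ) ^ (1 / p) / 2) ∧
    (∀ R : ℝ, R < d / 2 → ∀ c₁ ∈ Λ, ∀ c₂ ∈ Λ, c₁ ≠ c₂ →
        Disjoint {z : Fin n → ℤ | dp n p z c₁ ≤ R} {z : Fin n → ℤ | dp n p z c₂ ≤ R}) ∧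
    (∀ R : ℝ, d / 2 + (n : ℝ) ^ (1 / p) / 2 ≤ R →
        ∃ c₁ ∈ Λ, ∃ c₂ ∈ Λ, c₁ ≠ c₂ ∧
          ¬ Disjoint {z : Fin n → ℤ | dp n p z c₁ ≤ R}
              {z : Fin n → ℤ | dp n p z c₂ ≤ R}) := by
  refine ⟨exists_approx_midpoint hp, ?_, ?_⟩
  · intro R hR c₁ h₁ c₂ h₂ hne
    refine Set.disjoint_left.mpr fun z hz₁ hz₂ => ?_
    have hmin : d ≤ dp n p c₁ c₂ :=
      hd.2 ⟨c₁ - c₂, Λ.sub_mem h₁ h₂, sub_ne_zero.mpr hne, (dp_sub_zero n p c₁ c₂).symm⟩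
    have htri := dp_triangle hp c₁ z c₂
    rw [dp_comm n p c₁ z] at htri
    rw [Set.mem_ofPred_eq] at hz₁ hz₂
    linarith
  · intro R hR
    obtain ⟨x, hx, hx0, rfl⟩ := hd.1
    obtain ⟨y, hy0, hxy⟩ := exists_approx_midpoint hp x
    have hpos : 0 ≤ (n : ℝ) ^ (1 / p) := by positivity
    refine ⟨x, hx, 0, Λ.zero_mem, hx0, Set.not_disjoint_iff.mpr ⟨y, ?_, ?_⟩⟩
    · rw [Set.mem_ofPred_eq, dp_comm]
      linarith
    · rw [Set.mem_ofPred_eq]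
      linarith
end

section
/- Let n ≥ 1 be an integer, p a real number with 1 ≤ p < ∞, and set l = n^{1/p}/2. For every real r > l, one has V_{n,p}·(r − l)^n ≤ μ_p(n,r) ≤ V_{n,p}·(r + l)^n, where μ_p(n,r) is the number of integer points in the ℓ_p ball of radius r and V_{n,p} is the volume of the unit superball in ℝ^n. -/
open Finset

/-- `μ_p(n,r)`: the number of integer points in the `ℓ_p` ball of radius `r` in `ℤ^n`. -/
noncomputable def mup (n : ℕ) (p r : ℝ) : ℕ :=
  Set.ncard {x : Fin n → ℤ | (∑ i, (|x i| : ℝ) ^ p) ^ (1 / p) ≤ r}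

/-- `V_{n,p}`: the Lebesgue volume of the unit superball in `ℝ^n`. -/
noncomputable def Vnp (n : ℕ) (p : ℝ) : ℝ :=
  (MeasureTheory.volume {x : Fin n → ℝ | ∑ i, |x i| ^ p ≤ 1}).toReal

open MeasureTheory

/-- The points rounding to `x` form a half-open unit cube. -/
lemma preimage_round_eq_pi {n : ℕ} (x : Fin n → ℤ) :
    (fun (y : Fin n → ℝ) i => round (y i)) ⁻¹' {x} =
      Set.univ.pi fun i => Set.Ico ((x i : ℝ) - 1 / 2) (x i + 1 / 2) := by
  ext y
  simp only [Set.mem_preimage, Set.mem_singleton_iff, Set.mem_univ_pi, Set.mem_Ico, funext_iff,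
    round_eq, Int.floor_eq_iff]
  refine forall_congr' fun i => ?_
  constructor <;> rintro ⟨h₁, h₂⟩ <;> constructor <;> linarith

lemma volume_preimage_round_singleton {n : ℕ} (x : Fin n → ℤ) :
    volume ((fun (y : Fin n → ℝ) i => round (y i)) ⁻¹' {x}) = 1 := by
  rw [preimage_round_eq_pi, Real.volume_pi_Ico]
  norm_num

lemma measurable_pi_round {n : ℕ} : Measurable fun (y : Fin n → ℝ) i => round (y i) := by
  simp only [round_eq]
  fun_prop

lemma volume_preimage_round {n : ℕ} (s : Finset (Fin n → ℤ)) :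
    volume ((fun (y : Fin n → ℝ) i => round (y i)) ⁻¹' s) = s.card := by
  rw [← sum_measure_preimage_singleton s fun x _ => measurable_pi_round (measurableSet_singleton x)]
  simp [volume_preimage_round_singleton]

lemma abs_le_rpow_sum_abs {n : ℕ} {p : ℝ} (hp : 1 ≤ p) (x : Fin n → ℝ) (i : Fin n) :
    |x i| ≤ (∑ j, |x j| ^ p) ^ (1 / p) := by
  rw [one_div, Real.le_rpow_inv_iff_of_pos (abs_nonneg _) (by positivity) (by positivity)]
  exact single_le_sum (f := fun j => |x j| ^ p) (fun j _ => by positivity) (mem_univ i)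

lemma finite_setOf_lp_le (n : ℕ) {p : ℝ} (hp : 1 ≤ p) (r : ℝ) :
    {x : Fin n → ℤ | (∑ i, (|x i| : ℝ) ^ p) ^ (1 / p) ≤ r}.Finite := by
  refine (Set.finite_Icc (fun _ => -⌈r⌉) (fun _ => ⌈r⌉)).subset fun x hx => ?_
  have h (i) : |x i| ≤ ⌈r⌉ := by
    have := ((abs_le_rpow_sum_abs hp (fun j => (x j : ℝ)) i).trans hx).trans (Int.le_ceil r)
    exact_mod_cast this
  exact ⟨fun i => (abs_le.mp (h i)).1, fun i => (abs_le.mp (h i)).2⟩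

/-- Perturbations with entries at most `1 / 2` in absolute value change the `ℓ_p` norm by at most
`n ^ (1 / p) / 2`. -/
lemma lp_le_add_of_abs_sub_le_half {n : ℕ} {p : ℝ} (hp : 1 ≤ p) {x y : Fin n → ℝ}
    (h : ∀ i, |x i - y i| ≤ 1 / 2) :
    (∑ i, |x i| ^ p) ^ (1 / p) ≤ (∑ i, |y i| ^ p) ^ (1 / p) + (n : ℝ) ^ (1 / p) / 2 := by
  have hp₀ : 0 < p := by positivity
  have key := Real.Lp_add_le univ y (x - y) hp
  simp only [Pi.sub_apply, add_sub_cancel] at key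
  refine key.trans (add_le_add_right ?_ _)
  calc (∑ i, |x i - y i| ^ p) ^ (1 / p)
      ≤ (∑ _i : Fin n, (1 / 2 : ℝ) ^ p) ^ (1 / p) := by
        gcongr with i
        exact h i
    _ = (n : ℝ) ^ (1 / p) / 2 := by
        rw [sum_const, card_univ, Fintype.card_fin, nsmul_eq_mul,
          Real.mul_rpow (by positivity) (by positivity), ← Real.rpow_mul (by norm_num),
          mul_one_div_cancel hp₀.ne', Real.rpow_one]
        ring

lemma volume_lp_le {n : ℕ} (hn : 1 ≤ n) {p : ℝ} (hp : 1 ≤ p) {r : ℝ} (hr : 0 ≤ r) :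
    volume {x : Fin n → ℝ | (∑ i, |x i| ^ p) ^ (1 / p) ≤ r} = ENNReal.ofReal (Vnp n p * r ^ n) := by
  have : Nonempty (Fin n) := ⟨⟨0, hn⟩⟩
  have hset : {x : Fin n → ℝ | ∑ i, |x i| ^ p ≤ 1} =
      {x : Fin n → ℝ | (∑ i, |x i| ^ p) ^ (1 / p) ≤ 1} := by
    ext x
    rw [Set.mem_ofPred_eq, Set.mem_ofPred_eq, one_div, Real.rpow_inv_le_iff_of_pos
      (by positivity) zero_le_one (by positivity), Real.one_rpow]
  rw [Vnp, hset, volume_sum_rpow_le _ hp, volume_sum_rpow_le _ hp, mul_comm,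
    ENNReal.ofReal_mul ENNReal.toReal_nonneg, ENNReal.ofReal_toReal (by finiteness),
    ENNReal.ofReal_pow hr]
  simp

/-- With `l = n^{1/p}/2` and `r > l`, we have
`V_{n,p}·(r − l)^n ≤ μ_p(n,r) ≤ V_{n,p}·(r + l)^n`. -/
theorem mup_bounds (n : ℕ) (hn : 1 ≤ n) (p : ℝ) (hp : 1 ≤ p) (r : ℝ)
    (hr : (n : ℝ) ^ (1 / p) / 2 < r) :
    Vnp n p * (r - (n : ℝ) ^ (1 / p) / 2) ^ n ≤ (mup n p r : ℝ) ∧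
    (mup n p r : ℝ) ≤ Vnp n p * (r + (n : ℝ) ^ (1 / p) / 2) ^ n := by
  set l := (n : ℝ) ^ (1 / p) / 2 with hl
  have hl₀ : 0 ≤ l := by positivity
  have hfin := finite_setOf_lp_le n hp r
  have hvol := volume_preimage_round hfin.toFinset
  rw [← Set.ncard_eq_toFinset_card _ hfin, hfin.coe_toFinset] at hvol
  change _ = ((mup n p r : ℕ) : ENNReal) at hvol
  have hV : 0 ≤ Vnp n p := ENNReal.toReal_nonneg
  constructor
  · have hsub : {y : Fin n → ℝ | (∑ i, |y i| ^ p) ^ (1 / p) ≤ r - l} ⊆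
        (fun (y : Fin n → ℝ) i => round (y i)) ⁻¹'
          {x : Fin n → ℤ | (∑ i, (|x i| : ℝ) ^ p) ^ (1 / p) ≤ r} := fun y hy => by
      have := lp_le_add_of_abs_sub_le_half hp (x := fun i => (round (y i) : ℝ)) (y := y)
        fun i => by rw [abs_sub_comm]; exact abs_sub_round (y i)
      simp only [Set.mem_ofPred_eq, Set.mem_preimage] at hy ⊢
      linarith
    have hle := measure_mono (μ := volume) hsub
    rw [hvol, volume_lp_le hn hp (by linarith), ← ENNReal.ofReal_natCast] at hle
    exact (ENNReal.ofReal_le_ofReal_iff (by positivity)).mp hle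
  · have hsub : (fun (y : Fin n → ℝ) i => round (y i)) ⁻¹'
          {x : Fin n → ℤ | (∑ i, (|x i| : ℝ) ^ p) ^ (1 / p) ≤ r} ⊆
        {y : Fin n → ℝ | (∑ i, |y i| ^ p) ^ (1 / p) ≤ r + l} := fun y hy => by
      have := lp_le_add_of_abs_sub_le_half hp (x := y) (y := fun i => (round (y i) : ℝ))
        fun i => abs_sub_round (y i)
      simp only [Set.mem_ofPred_eq, Set.mem_preimage] at hy ⊢
      linarith
    have hle := measure_mono (μ := volume) hsub
    have hrl : 0 ≤ r + l := by linarith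
    rw [hvol, volume_lp_le hn hp hrl, ← ENNReal.ofReal_natCast] at hle
    exact (ENNReal.ofReal_le_ofReal_iff (by positivity)).mp hle
end

section
/- Let n ≥ 2 be an integer and p a real number with 1 < p < ∞. There exists a real number R (depending on n and p) such that for every real r ≥ R, there is no additive subgroup Λ of ℤ^n for which the translates c + B_p^n(r), c ∈ Λ, partition ℤ^n; that is, no linear r-perfect code in ℤ^n in the ℓ_p metric exists for r ≥ R. -/
open Finset

open Filter Topology

/-- The sum of the `p`-th powers of the absolute values of the coordinates. -/
noncomputable def powSum {n : ℕ} (p : ℝ) (v : Fin n → ℝ) : ℝ := ∑ i, |v i| ^ p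

/-- The rescaling of an integer vector by `1 / r`. -/
noncomputable def rescale {n : ℕ} (r : ℝ) (z : Fin n → ℤ) : Fin n → ℝ := fun i => (z i : ℝ) / r

lemma continuous_powSum {n : ℕ} {p : ℝ} (hp : 0 < p) :
    Continuous (powSum p : (Fin n → ℝ) → ℝ) :=
  continuous_finsetSum _ fun i _ =>
    (continuous_abs.comp (continuous_apply i)).rpow_const fun _ => Or.inr hp.le

lemma powSum_neg {n : ℕ} (p : ℝ) (v : Fin n → ℝ) : powSum p (-v) = powSum p v := by
  simp [powSum]

lemma dp_le_iff {n : ℕ} {p r : ℝ} (hp : 0 < p) (hr : 0 < r) (z c : Fin n → ℤ) :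
    dp n p z c ≤ r ↔ powSum p (rescale r (z - c)) ≤ 1 := by
  have hsum : powSum p (rescale r (z - c)) = (∑ i, (|(z i : ℝ) - c i|) ^ p) / r ^ p := by
    rw [powSum, Finset.sum_div]
    refine Finset.sum_congr rfl fun i _ => ?_
    rw [rescale, abs_div, abs_of_pos hr, Real.div_rpow (abs_nonneg _) hr.le]
    simp
  rw [hsum, div_le_one (by positivity), dp, one_div,
    Real.rpow_inv_le_iff_of_pos (Finset.sum_nonneg fun i _ => by positivity) hr.le hp]

lemma abs_le_one_of_powSum_le_one {n : ℕ} {p : ℝ} (hp : 0 < p) {v : Fin n → ℝ}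
    (hv : powSum p v ≤ 1) (i : Fin n) : |v i| ≤ 1 := by
  have h : |v i| ^ p ≤ 1 := (Finset.single_le_sum (f := fun i => |v i| ^ p)
    (fun i _ => by positivity) (Finset.mem_univ i)).trans hv
  by_contra! hlt
  exact absurd h (not_le.2 (Real.one_lt_rpow hlt hp))

lemma abs_midpoint_rpow_le {p : ℝ} (hp : 1 < p) (x y : ℝ) :
    |(x + y) / 2| ^ p ≤ (|x| ^ p + |y| ^ p) / 2 := by
  have h := (convexOn_rpow hp.le).2 (abs_nonneg x) (abs_nonneg y)
    (by norm_num : (0 : ℝ) ≤ 1 / 2) (by norm_num : (0 : ℝ) ≤ 1 / 2) (by norm_num)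
  simp only [smul_eq_mul] at h
  have hxy : |(x + y) / 2| ≤ 1 / 2 * |x| + 1 / 2 * |y| := by
    rw [abs_div, abs_two]; linarith [abs_add_le x y]
  linarith [Real.rpow_le_rpow (abs_nonneg _) hxy (by linarith : 0 ≤ p)]

lemma abs_midpoint_rpow_lt {p : ℝ} (hp : 1 < p) {x y : ℝ} (hne : x ≠ y) :
    |(x + y) / 2| ^ p < (|x| ^ p + |y| ^ p) / 2 := by
  by_cases habs : |x| = |y|
  · obtain rfl : x = -y := (abs_eq_abs.1 habs).resolve_left hne
    have hy : y ≠ 0 := by rintro rfl; simp at hne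
    have : 0 < |y| ^ p := Real.rpow_pos_of_pos (abs_pos.2 hy) p
    simp [Real.zero_rpow (by linarith : p ≠ 0), this]
  · have h := (strictConvexOn_rpow hp).2 (abs_nonneg x) (abs_nonneg y) habs
      (by norm_num : (0 : ℝ) < 1 / 2) (by norm_num : (0 : ℝ) < 1 / 2) (by norm_num)
    simp only [smul_eq_mul] at h
    have hxy : |(x + y) / 2| ≤ 1 / 2 * |x| + 1 / 2 * |y| := by
      rw [abs_div, abs_two]; linarith [abs_add_le x y]
    linarith [Real.rpow_le_rpow (abs_nonneg _) hxy (by linarith : 0 ≤ p)]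

/-- Strict convexity of the unit ball: its only points with a midpoint outside the open ball
are equal. -/
lemma eq_of_one_le_powSum_midpoint {n : ℕ} {p : ℝ} (hp : 1 < p) {u v : Fin n → ℝ}
    (hu : powSum p u ≤ 1) (hv : powSum p v ≤ 1)
    (hmid : 1 ≤ powSum p (fun i => (u i + v i) / 2)) : u = v := by
  by_contra hne
  obtain ⟨i, hi⟩ := Function.ne_iff.1 hne
  have hlt : powSum p (fun i => (u i + v i) / 2) < ∑ i, (|u i| ^ p + |v i| ^ p) / 2 :=
    Finset.sum_lt_sum (fun j _ => abs_midpoint_rpow_le hp _ _)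
      ⟨i, Finset.mem_univ i, abs_midpoint_rpow_lt hp hi⟩
  rw [← Finset.sum_div, Finset.sum_add_distrib] at hlt
  unfold powSum at *
  linarith

/-- Bounded perturbations do not change the limit after division by a divergent sequence. -/
lemma tendsto_div_of_abs_sub_le_one {ι : Type*} {l : Filter ι} {r x y : ι → ℝ} {a : ℝ}
    (hr : Tendsto r l atTop) (hxy : ∀ k, |x k - y k| ≤ 1)
    (hy : Tendsto (fun k => y k / r k) l (𝓝 a)) : Tendsto (fun k => x k / r k) l (𝓝 a) := by
  have hdiff : Tendsto (fun k => (x k - y k) / r k) l (𝓝 0) := by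
    refine squeeze_zero_norm' ?_ (tendsto_inv_atTop_zero.comp hr)
    filter_upwards [hr.eventually_gt_atTop 0] with k hk
    rw [Real.norm_eq_abs, abs_div, abs_of_pos hk, Function.comp_apply, div_eq_mul_inv]
    exact mul_le_of_le_one_left (by positivity) (hxy k)
  simpa [← add_div] using hy.add hdiff

/-- In the scaling limit, nonzero points of perfect codes have half-norm at least one. -/
lemma one_le_powSum_of_tendsto_rescale {n : ℕ} {p : ℝ} (hp : 0 < p) {ι : Type*}
    {l : Filter ι} [l.NeBot] {r : ι → ℝ} (hr : Tendsto r l atTop)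
    {Λ : ι → AddSubgroup (Fin n → ℤ)}
    (hΛ : ∀ k z, ∃! c, c ∈ Λ k ∧ dp n p z c ≤ r k)
    {c : ι → Fin n → ℤ} (hc : ∀ k, c k ∈ Λ k) (hc0 : ∀ᶠ k in l, c k ≠ 0)
    {a : Fin n → ℝ} (ha : Tendsto (fun k => rescale (r k) (c k)) l (𝓝 a)) :
    1 ≤ powSum p (fun i => a i / 2) := by
  by_contra! hlt
  let m : ι → Fin n → ℤ := fun k i => c k i / 2
  have hm : Tendsto (fun k => rescale (r k) (m k)) l (𝓝 fun i => a i / 2) := by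
    refine tendsto_pi_nhds.2 fun i => ?_
    refine tendsto_div_of_abs_sub_le_one (y := fun k => (c k i : ℝ) / 2) hr (fun k => ?_) ?_
    · have h₁ : 2 * m k i ≤ c k i := by simp only [m]; omega
      have h₂ : c k i ≤ 2 * m k i + 1 := by simp only [m]; omega
      have h₃ : 2 * (m k i : ℝ) ≤ c k i := by exact_mod_cast h₁
      have h₄ : (c k i : ℝ) ≤ 2 * m k i + 1 := by exact_mod_cast h₂
      rw [abs_le]; constructor <;> linarith
    · simpa only [rescale, div_right_comm] using (tendsto_pi_nhds.1 ha i).div_const 2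
  have hmc : Tendsto (fun k => rescale (r k) (m k - c k)) l (𝓝 (-fun i => a i / 2)) := by
    convert hm.sub ha using 2
    · ext i; simp [rescale, sub_div]
    · ext i; simp only [Pi.neg_apply, Pi.sub_apply]; ring
  have hcont := continuous_powSum (n := n) hp
  have h₁ := ((hcont.tendsto _).comp hm).eventually_lt_const hlt
  have h₂ := ((hcont.tendsto _).comp hmc).eventually_lt_const (by rwa [powSum_neg])
  obtain ⟨k, hk0, hk₁, hk₂, hrk⟩ :=
    (hc0.and (h₁.and (h₂.and (hr.eventually_gt_atTop 0)))).exists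
  refine hk0 ((hΛ k (m k)).unique ⟨hc k, (dp_le_iff hp hrk _ _).2 hk₂.le⟩
    ⟨zero_mem _, (dp_le_iff hp hrk _ _).2 ?_⟩)
  simpa using hk₁.le

/-- In the scaling limit, the codeword next to a point `u` of the unit sphere is `2 u`. -/
lemma exists_tendsto_rescale_two_mul {n : ℕ} {p : ℝ} (hp : 1 < p) {ι : Type*}
    (U : Ultrafilter ι) {r : ι → ℝ} (hr : Tendsto r U atTop) (hpos : ∀ k, 0 < r k)
    {Λ : ι → AddSubgroup (Fin n → ℤ)}
    (hΛ : ∀ k z, ∃! c, c ∈ Λ k ∧ dp n p z c ≤ r k)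
    {u : Fin n → ℝ} (hu0 : ∀ i, 0 ≤ u i) (hu : powSum p u = 1) :
    ∃ c : ι → Fin n → ℤ, (∀ k, c k ∈ Λ k) ∧
      Tendsto (fun k => rescale (r k) (c k)) U (𝓝 fun i => 2 * u i) := by
  have hp0 : 0 < p := by linarith
  let z : ι → Fin n → ℤ := fun k i => ⌊r k * u i⌋ + 1
  choose c hcΛ _ using fun k => hΛ k (z k)
  have hcmem : ∀ k, c k ∈ Λ k := fun k => (hcΛ k).1
  have hball : ∀ k, powSum p (rescale (r k) (z k - c k)) ≤ 1 :=
    fun k => (dp_le_iff hp0 (hpos k) _ _).1 (hcΛ k).2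
  have hz : Tendsto (fun k => rescale (r k) (z k)) U (𝓝 u) := by
    refine tendsto_pi_nhds.2 fun i => ?_
    refine tendsto_div_of_abs_sub_le_one (y := fun k => r k * u i) hr (fun k => ?_) ?_
    · simp only [z]; push_cast
      rw [abs_le]
      constructor <;> linarith [Int.floor_le (r k * u i), Int.lt_floor_add_one (r k * u i)]
    · simp [mul_div_cancel_left₀ _ (hpos _).ne']
  have hzout : ∀ k, 1 < powSum p (rescale (r k) (z k)) := by
    intro k
    have hlt : ∀ i, u i < rescale (r k) (z k) i := fun i => by
      rw [rescale, lt_div_iff₀ (hpos k), mul_comm]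
      simp [z]
    have hne : (Finset.univ : Finset (Fin n)).Nonempty := by
      by_contra h
      rw [Finset.not_nonempty_iff_eq_empty] at h
      simp [powSum, h] at hu
    rw [← hu]
    refine Finset.sum_lt_sum_of_nonempty hne fun i _ => ?_
    rw [abs_of_nonneg (hu0 i), abs_of_nonneg ((hu0 i).trans (hlt i).le)]
    exact Real.rpow_lt_rpow (hu0 i) (hlt i) hp0
  have hc0 : ∀ k, c k ≠ 0 := fun k h => by
    have := hball k
    rw [h, sub_zero] at this
    exact absurd this (not_le.2 (hzout k))
  obtain ⟨w, -, hw⟩ := (isCompact_Icc (a := fun _ : Fin n => (-1 : ℝ))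
    (b := fun _ => 1)).ultrafilter_le_nhds (U.map fun k => rescale (r k) (z k - c k)) (by
      refine le_principal_iff.2 (Filter.mem_map.2 (univ_mem' fun k => ?_))
      exact ⟨fun i => (abs_le.1 (abs_le_one_of_powSum_le_one hp0 (hball k) i)).1,
        fun i => (abs_le.1 (abs_le_one_of_powSum_le_one hp0 (hball k) i)).2⟩)
  replace hw : Tendsto (fun k => rescale (r k) (z k - c k)) U (𝓝 w) := hw
  have hc : Tendsto (fun k => rescale (r k) (c k)) U (𝓝 (u - w)) := by
    convert hz.sub hw using 2
    ext i; simp [rescale, sub_div]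
  have hw1 : powSum p (-w) ≤ 1 := by
    rw [powSum_neg]
    exact le_of_tendsto (((continuous_powSum hp0).tendsto w).comp hw) (Eventually.of_forall hball)
  have huw : u = -w := by
    refine eq_of_one_le_powSum_midpoint hp hu.le hw1 ?_
    simpa [sub_eq_add_neg] using
      one_le_powSum_of_tendsto_rescale hp0 hr hΛ hcmem (Eventually.of_forall hc0) hc
  refine ⟨c, hcmem, ?_⟩
  convert hc using 2
  ext i
  have := congrFun huw i
  simp only [Pi.neg_apply, Pi.sub_apply] at this ⊢
  linarith

/-- In dimension at least two there are distinct points of the unit sphere at distance less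
than one from each other. -/
lemma exists_close_points_on_sphere {n : ℕ} (hn : 2 ≤ n) {p : ℝ} (hp : 0 < p) :
    ∃ u v : Fin n → ℝ, (∀ i, 0 ≤ u i) ∧ (∀ i, 0 ≤ v i) ∧ powSum p u = 1 ∧ powSum p v = 1 ∧
      u ≠ v ∧ powSum p (u - v) < 1 := by
  obtain ⟨n, rfl⟩ := Nat.exists_eq_add_of_le' hn
  have hα : (3 / 4 : ℝ) ^ p < 1 := Real.rpow_lt_one (by norm_num) (by norm_num) hp
  have hβ : 0 ≤ (1 - (3 / 4 : ℝ) ^ p) ^ p⁻¹ := Real.rpow_nonneg (by linarith) _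
  have hβp : ((1 - (3 / 4 : ℝ) ^ p) ^ p⁻¹) ^ p = 1 - (3 / 4 : ℝ) ^ p :=
    Real.rpow_inv_rpow (by linarith) hp.ne'
  set β := (1 - (3 / 4 : ℝ) ^ p) ^ p⁻¹
  have hlt : (1 / 4 : ℝ) ^ p < (3 / 4 : ℝ) ^ p :=
    Real.rpow_lt_rpow (by norm_num) (by norm_num) hp
  refine ⟨Fin.cons 1 (Fin.cons 0 fun _ => 0), Fin.cons (3 / 4) (Fin.cons β fun _ => 0),
    ?_, ?_, ?_, ?_, ?_, ?_⟩
  · exact Fin.cases (by simp) (Fin.cases (by simp) (by simp))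
  · exact Fin.cases (by norm_num) (Fin.cases (by simpa) (by simp))
  · simp [powSum, Fin.sum_univ_succ, Real.zero_rpow hp.ne']
  · simp [powSum, Fin.sum_univ_succ, Real.zero_rpow hp.ne', abs_of_nonneg hβ, hβp,
      abs_of_pos (by norm_num : (0 : ℝ) < 3 / 4)]
  · intro h
    have := congrFun h 0
    norm_num at this
  · have h14 : |(1 : ℝ) - 3 / 4| = 1 / 4 := by norm_num [abs_of_pos]
    simp only [powSum, Fin.sum_univ_succ, Pi.sub_apply, Fin.cons_zero, Fin.cons_succ, h14,
      zero_sub, abs_neg, abs_of_nonneg hβ, hβp, neg_zero, abs_zero, Real.zero_rpow hp.ne',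
      Finset.sum_const_zero]
    linarith

/-- For `n ≥ 2` and `1 < p < ∞` there is a threshold radius `R` beyond which no linear
`r`-perfect code in `ℤ^n` in the `ℓ_p` metric exists. -/
theorem no_large_linear_perfect_codes (n : ℕ) (hn : 2 ≤ n) (p : ℝ) (hp : 1 < p) :
    ∃ R : ℝ, ∀ r : ℝ, R ≤ r →
      ¬ ∃ Λ : AddSubgroup (Fin n → ℤ),
          ∀ z : Fin n → ℤ, ∃! c, c ∈ Λ ∧ dp n p z c ≤ r := by
  by_contra! hcodes
  choose r hle Λ hΛ using fun k : ℕ => hcodes ((k : ℝ) + 1)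
  have hp0 : 0 < p := by linarith
  have hpos : ∀ k, 0 < r k := fun k => by linarith [hle k, (Nat.cast_nonneg k : (0 : ℝ) ≤ k)]
  let U : Ultrafilter ℕ := hyperfilter ℕ
  have hr : Tendsto r U atTop :=
    (tendsto_atTop_mono (fun k => by linarith [hle k]) tendsto_natCast_atTop_atTop).mono_left
      Nat.hyperfilter_le_atTop
  obtain ⟨u, v, hu0, hv0, hu, hv, hne, hdist⟩ := exists_close_points_on_sphere hn hp0
  obtain ⟨c, hcΛ, hc⟩ := exists_tendsto_rescale_two_mul hp U hr hpos hΛ hu0 hu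
  obtain ⟨d, hdΛ, hd⟩ := exists_tendsto_rescale_two_mul hp U hr hpos hΛ hv0 hv
  have hcd : Tendsto (fun k => rescale (r k) (c k - d k)) U (𝓝 fun i => 2 * (u - v) i) := by
    convert hc.sub hd using 2
    · ext i; simp [rescale, sub_div]
    · ext i; simp only [Pi.sub_apply]; ring
  have hcd0 : ∀ᶠ k in (U : Filter ℕ), c k - d k ≠ 0 := by
    have hlim : (fun i => 2 * (u - v) i) ≠ (0 : Fin n → ℝ) := by
      obtain ⟨i, hi⟩ := Function.ne_iff.1 hne
      refine Function.ne_iff.2 ⟨i, ?_⟩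
      simpa [sub_eq_zero] using hi
    filter_upwards [hcd.eventually_ne hlim] with k hk h
    refine hk ?_
    rw [h]
    ext i
    simp [rescale]
  have hfar := one_le_powSum_of_tendsto_rescale hp0 hr hΛ
    (fun k => sub_mem (hcΛ k) (hdΛ k)) hcd0 hcd
  simp only [mul_div_cancel_left₀ _ (two_ne_zero' ℝ)] at hfar
  exact absurd hdist (not_lt.2 hfar)
end

section
/- Let n ≥ 1 be an integer, p a real number with 1 ≤ p < ∞, l = n^{1/p}/2, and r a real number with r > l. Suppose Λ is an additive subgroup of ℤ^n whose translates of B_p^n(r) partition ℤ^n, and let d = d_p(Λ) be its minimum ℓ_p distance. Then the index [ℤ^n : Λ] is finite and equals μ_p(n,r), and the density of the induced superball packing satisfies V_{n,p}·(d/2)^n / [ℤ^n : Λ] ≥ ((r − l)/(r + l))^n. -/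
open Finset

/-- The `ℓ_p` size of a real vector. -/
noncomputable def lpSize {n : ℕ} (p : ℝ) (x : Fin n → ℝ) : ℝ :=
  (∑ i, |x i| ^ p) ^ (1 / p)

theorem lpSize_add_le {n : ℕ} {p : ℝ} (hp : 1 ≤ p) (x y : Fin n → ℝ) :
    lpSize p (fun i => x i + y i) ≤ lpSize p x + lpSize p y :=
  Real.Lp_add_le univ x y hp

theorem lpSize_sub_le {n : ℕ} {p : ℝ} (hp : 1 ≤ p) (x y : Fin n → ℝ) :
    lpSize p (fun i => x i - y i) ≤ lpSize p x + lpSize p y := by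
  simpa [lpSize, sub_eq_add_neg] using lpSize_add_le hp x (fun i => -y i)

theorem lpSize_const_mul {n : ℕ} {p : ℝ} (hp : 1 ≤ p) {c : ℝ} (hc : 0 ≤ c) (x : Fin n → ℝ) :
    lpSize p (fun i => c * x i) = c * lpSize p x := by
  have hp0 : p ≠ 0 := by linarith
  simp only [lpSize, abs_mul, abs_of_nonneg hc]
  simp_rw [Real.mul_rpow hc (abs_nonneg _)]
  rw [← Finset.mul_sum, Real.mul_rpow (by positivity) (by positivity), one_div,
    Real.rpow_rpow_inv hc hp0]

theorem lpSize_le_of_abs_le_half {n : ℕ} {p : ℝ} (hp : 1 ≤ p) {x : Fin n → ℝ}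
    (hx : ∀ i, |x i| ≤ 1 / 2) : lpSize p x ≤ (n : ℝ) ^ (1 / p) / 2 := by
  have hp0 : p ≠ 0 := by linarith
  have hle : ∑ i, |x i| ^ p ≤ n * (1 / 2 : ℝ) ^ p := by
    calc ∑ i, |x i| ^ p ≤ ∑ _i : Fin n, (1 / 2 : ℝ) ^ p :=
          Finset.sum_le_sum fun i _ => Real.rpow_le_rpow (abs_nonneg _) (hx i) (by linarith)
      _ = n * (1 / 2 : ℝ) ^ p := by simp
  calc lpSize p x ≤ (n * (1 / 2 : ℝ) ^ p) ^ (1 / p) :=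
        Real.rpow_le_rpow (by positivity) hle (by positivity)
    _ = (n : ℝ) ^ (1 / p) / 2 := by
        rw [Real.mul_rpow (by positivity) (by positivity), one_div p,
          Real.rpow_rpow_inv (by norm_num) hp0]
        ring

theorem abs_le_lpSize {n : ℕ} {p : ℝ} (hp : 1 ≤ p) (x : Fin n → ℝ) (i : Fin n) :
    |x i| ≤ lpSize p x := by
  have hp0 : p ≠ 0 := by linarith
  calc |x i| = (|x i| ^ p) ^ (1 / p) := by
        rw [one_div, Real.rpow_rpow_inv (abs_nonneg _) hp0]
    _ ≤ lpSize p x := Real.rpow_le_rpow (by positivity)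
        (Finset.single_le_sum (f := fun i => |x i| ^ p) (fun j _ => by positivity)
          (Finset.mem_univ i)) (by positivity)

/-- The integer points of the `ℓ_p` ball of radius `r`. -/
def latticeBall (n : ℕ) (p r : ℝ) : Set (Fin n → ℤ) :=
  {x | lpSize p (fun i => (x i : ℝ)) ≤ r}

theorem latticeBall_finite {n : ℕ} {p : ℝ} (hp : 1 ≤ p) (r : ℝ) :
    (latticeBall n p r).Finite := by
  refine (Set.Finite.pi' fun _ : Fin n => Set.finite_Icc (-⌈r⌉) ⌈r⌉).subset fun x hx i => ?_
  have h : |(x i : ℝ)| ≤ r := (abs_le_lpSize hp (fun i => (x i : ℝ)) i).trans hx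
  have h2 : |x i| ≤ ⌈r⌉ := by
    exact_mod_cast h.trans (Int.le_ceil r)
  exact abs_le.mp h2

theorem volume_lpSize_le {n : ℕ} (hn : 1 ≤ n) {p : ℝ} (hp : 1 ≤ p) {R : ℝ} (hR : 0 ≤ R) :
    MeasureTheory.volume {x : Fin n → ℝ | lpSize p x ≤ R} = ENNReal.ofReal (R ^ n * Vnp n p) := by
  have : Nonempty (Fin n) := ⟨⟨0, hn⟩⟩
  have hset : {x : Fin n → ℝ | ∑ i, |x i| ^ p ≤ 1} =
      {x : Fin n → ℝ | (∑ i, |x i| ^ p) ^ (1 / p) ≤ 1} := by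
    ext x
    have h := Real.rpow_le_rpow_iff (x := ∑ i, |x i| ^ p) (z := 1 / p) (by positivity)
      zero_le_one (by positivity)
    rw [Real.one_rpow] at h
    exact h.symm
  have hV : MeasureTheory.volume {x : Fin n → ℝ | ∑ i, |x i| ^ p ≤ 1} =
      ENNReal.ofReal (Vnp n p) := by
    rw [Vnp, ENNReal.ofReal_toReal]
    rw [hset, MeasureTheory.volume_sum_rpow_le (Fin n) hp]
    exact ENNReal.mul_ne_top (by simp) (by simp)
  rw [ENNReal.ofReal_mul (by positivity), ← hV, hset,
    MeasureTheory.volume_sum_rpow_le (Fin n) hp]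
  simp only [lpSize]
  rw [MeasureTheory.volume_sum_rpow_le (Fin n) hp]
  simp [ENNReal.ofReal_pow hR]

/-- Unit cubes around the integer points of a ball fit in a slightly larger real ball. -/
theorem ncard_latticeBall_le {n : ℕ} (hn : 1 ≤ n) {p : ℝ} (hp : 1 ≤ p) {r : ℝ} (hr : 0 ≤ r) :
    ((latticeBall n p r).ncard : ℝ) ≤ (r + (n : ℝ) ^ (1 / p) / 2) ^ n * Vnp n p := by
  have hV : 0 ≤ Vnp n p := ENNReal.toReal_nonneg
  set cube : (Fin n → ℤ) → Set (Fin n → ℝ) := fun z =>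
    Set.univ.pi fun i => Set.Ico ((z i : ℝ) - 1 / 2) (z i + 1 / 2) with hcube
  let s := (latticeBall_finite (n := n) hp r).toFinset
  have hdisj : (s : Set (Fin n → ℤ)).PairwiseDisjoint cube := by
    intro y _ z _ hyz
    refine Set.disjoint_left.mpr fun x hxy hxz => hyz (funext fun i => ?_)
    obtain ⟨h1, h2⟩ := hxy i (Set.mem_univ i)
    obtain ⟨h3, h4⟩ := hxz i (Set.mem_univ i)
    have h5 : (y i : ℝ) < z i + 1 := by linarith
    have h6 : (z i : ℝ) < y i + 1 := by linarith
    norm_cast at h5 h6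
    lia
  have hvol : ∀ z, MeasureTheory.volume (cube z) = 1 := by
    intro z
    rw [hcube, Real.volume_pi_Ico]
    refine Finset.prod_eq_one fun i _ => ?_
    rw [ENNReal.ofReal_eq_one]
    ring
  have hsub : (⋃ z ∈ s, cube z) ⊆
      {x : Fin n → ℝ | lpSize p x ≤ r + (n : ℝ) ^ (1 / p) / 2} := by
    refine Set.iUnion₂_subset fun z hz x hx => ?_
    have hz : lpSize p (fun i => (z i : ℝ)) ≤ r :=
      (latticeBall_finite hp r).mem_toFinset.mp hz
    have hx' : lpSize p (fun i => x i - z i) ≤ (n : ℝ) ^ (1 / p) / 2 := by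
      refine lpSize_le_of_abs_le_half hp fun i => ?_
      obtain ⟨h1, h2⟩ := hx i (Set.mem_univ i)
      rw [abs_le]
      constructor <;> linarith
    have h := lpSize_add_le hp (fun i => (z i : ℝ)) (fun i => x i - z i)
    simp only [add_sub_cancel] at h
    exact h.trans (add_le_add hz hx')
  have hmeas := MeasureTheory.measure_mono (μ := MeasureTheory.volume) hsub
  rw [MeasureTheory.measure_biUnion_finset hdisj
      (fun z _ => MeasurableSet.univ_pi fun i => measurableSet_Ico),
    volume_lpSize_le hn hp (by positivity)] at hmeas
  simp only [hvol, Finset.sum_const, nsmul_eq_mul, mul_one] at hmeas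
  rw [Set.ncard_eq_toFinset_card _ (latticeBall_finite hp r)]
  rw [← ENNReal.ofReal_natCast] at hmeas
  exact (ENNReal.ofReal_le_ofReal_iff (by positivity)).mp hmeas

theorem dp_eq_lpSize {n : ℕ} {p : ℝ} (x y : Fin n → ℤ) :
    dp n p x y = lpSize p (fun i => ((x - y) i : ℝ)) := by
  simp [dp, lpSize]

theorem dp_le_iff_sub_mem_latticeBall {n : ℕ} {p r : ℝ} (x y : Fin n → ℤ) :
    dp n p x y ≤ r ↔ x - y ∈ latticeBall n p r := by
  rw [dp_eq_lpSize]; rfl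

/-- The points of the ball form a complete system of representatives modulo a perfect code. -/
theorem index_eq_ncard_latticeBall {n : ℕ} {p r : ℝ} {Λ : AddSubgroup (Fin n → ℤ)}
    (hperf : ∀ z : Fin n → ℤ, ∃! c, c ∈ Λ ∧ dp n p z c ≤ r) :
    Λ.index = (latticeBall n p r).ncard := by
  rw [AddSubgroup.index, ← Nat.card_coe_set_eq]
  symm
  refine Nat.card_eq_of_bijective
    (fun x : latticeBall n p r => (QuotientAddGroup.mk x.1 : (Fin n → ℤ) ⧸ Λ)) ⟨?_, ?_⟩
  · rintro ⟨x, hx⟩ ⟨y, hy⟩ hxy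
    have hmem : -y + x ∈ Λ := QuotientAddGroup.eq.mp hxy.symm
    have h := (hperf x).unique (y₁ := -y + x) (y₂ := 0)
      ⟨hmem, (dp_le_iff_sub_mem_latticeBall _ _).mpr (by simpa using hy)⟩
      ⟨Λ.zero_mem, (dp_le_iff_sub_mem_latticeBall _ _).mpr (by simpa using hx)⟩
    exact Subtype.ext (neg_add_eq_zero.mp h).symm
  · intro q
    obtain ⟨z, rfl⟩ := QuotientAddGroup.mk_surjective q
    obtain ⟨c, ⟨hc, hzc⟩, -⟩ := hperf z
    refine ⟨⟨z - c, (dp_le_iff_sub_mem_latticeBall _ _).mp hzc⟩, ?_⟩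
    exact QuotientAddGroup.eq.mpr (by simpa using hc)

/-- Rounding half of a nonzero codeword gives a point close to both that codeword and `0`. -/
theorem lt_half_dp_add_of_perfect {n : ℕ} {p r : ℝ} (hp : 1 ≤ p) {Λ : AddSubgroup (Fin n → ℤ)}
    (hperf : ∀ z : Fin n → ℤ, ∃! c, c ∈ Λ ∧ dp n p z c ≤ r) {x : Fin n → ℤ} (hx : x ∈ Λ)
    (hx0 : x ≠ 0) : r < dp n p x 0 / 2 + (n : ℝ) ^ (1 / p) / 2 := by
  by_contra! hle
  set z : Fin n → ℤ := fun i => round ((1 / 2 : ℝ) * x i)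
  have herr : lpSize p (fun i => (1 / 2 : ℝ) * x i - z i) ≤ (n : ℝ) ^ (1 / p) / 2 :=
    lpSize_le_of_abs_le_half hp fun i => abs_sub_round _
  have hhalf : lpSize p (fun i => (1 / 2 : ℝ) * x i) = dp n p x 0 / 2 := by
    rw [lpSize_const_mul hp (by norm_num), dp_eq_lpSize]
    simp only [sub_zero]
    ring
  have h0 : dp n p z 0 ≤ r := by
    have h := lpSize_sub_le hp (fun i => (1 / 2 : ℝ) * x i) (fun i => (1 / 2 : ℝ) * x i - z i)
    simp only [sub_sub_cancel] at h
    rw [dp_eq_lpSize]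
    simp only [sub_zero]
    linarith
  have hzx : dp n p z x ≤ r := by
    have h := lpSize_add_le hp (fun i => (1 / 2 : ℝ) * x i) (fun i => (1 / 2 : ℝ) * x i - z i)
    have heq : dp n p z x =
        lpSize p (fun i => (1 / 2 : ℝ) * x i + ((1 / 2 : ℝ) * x i - z i)) := by
      simp only [dp, lpSize]
      congr 1
      refine Finset.sum_congr rfl fun i _ => ?_
      rw [abs_sub_comm]
      ring_nf
    linarith
  exact hx0 ((hperf z).unique ⟨hx, hzx⟩ ⟨Λ.zero_mem, h0⟩)

/-- If `Λ ⊆ ℤ^n` is a linear `r`-perfect code in the `ℓ_p` metric with `r > l = n^{1/p}/2`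
and minimum `ℓ_p` distance `d`, then the index `[ℤ^n : Λ]` is finite and equals `μ_p(n,r)`,
and the density of the induced superball packing satisfies
`V_{n,p}·(d/2)^n / [ℤ^n : Λ] ≥ ((r − l)/(r + l))^n`. -/
theorem perfect_code_density_bound (n : ℕ) (hn : 1 ≤ n) (p : ℝ) (hp : 1 ≤ p) (r : ℝ)
    (hr : (n : ℝ) ^ (1 / p) / 2 < r)
    (Λ : AddSubgroup (Fin n → ℤ))
    (hperf : ∀ z : Fin n → ℤ, ∃! c, c ∈ Λ ∧ dp n p z c ≤ r)
    (d : ℝ) (hd : IsLeast {e : ℝ | ∃ x ∈ Λ, x ≠ 0 ∧ e = dp n p x 0} d) :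
    Λ.index ≠ 0 ∧ Λ.index = mup n p r ∧
    ((r - (n : ℝ) ^ (1 / p) / 2) / (r + (n : ℝ) ^ (1 / p) / 2)) ^ n ≤
      Vnp n p * (d / 2) ^ n / (Λ.index : ℝ) := by
  have hl : 0 ≤ (n : ℝ) ^ (1 / p) / 2 := by positivity
  have hr0 : 0 < r := hl.trans_lt hr
  have hindex := index_eq_ncard_latticeBall hperf
  have hne : Λ.index ≠ 0 := by
    rw [hindex]
    refine (Set.ncard_pos (latticeBall_finite hp r)).mpr ⟨0, ?_⟩ |>.ne'
    have hzero := lpSize_const_mul hp le_rfl (fun _ : Fin n => (0 : ℝ))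
    simp only [zero_mul] at hzero
    simpa [latticeBall, hzero] using hr0.le
  refine ⟨hne, hindex, ?_⟩
  obtain ⟨x, hx, hx0, rfl⟩ := hd.1
  have hdist := lt_half_dp_add_of_perfect hp hperf hx hx0
  have hcard := ncard_latticeBall_le hn hp hr0.le
  rw [← hindex] at hcard
  have hV : 0 ≤ Vnp n p := ENNReal.toReal_nonneg
  have hpow : (r - (n : ℝ) ^ (1 / p) / 2) ^ n ≤ (dp n p x 0 / 2) ^ n :=
    pow_le_pow_left₀ (by linarith) (by linarith) n
  rw [div_pow, div_le_div_iff₀ (by positivity) (by positivity)]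
  calc (r - (n : ℝ) ^ (1 / p) / 2) ^ n * Λ.index
      ≤ (dp n p x 0 / 2) ^ n * ((r + (n : ℝ) ^ (1 / p) / 2) ^ n * Vnp n p) :=
        mul_le_mul hpow hcard (by positivity) ((pow_nonneg (by linarith) n).trans hpow)
    _ = Vnp n p * (dp n p x 0 / 2) ^ n * (r + (n : ℝ) ^ (1 / p) / 2) ^ n := by ring
end

section
/- Let s ≥ 1 be an integer and let B = {x ∈ ℤ² : x₁² + x₂² ≤ s} be the ℓ_2 ball in ℤ² of squared radius s. If there exists an additive subgroup Λ of ℤ² such that the translates c + B, c ∈ Λ, partition ℤ², then B = {x ∈ ℤ² : x₁² + x₂² ≤ t} for some t ∈ {1, 2, 4, 8}. Equivalently, there are no linear r-perfect codes in ℤ² in the ℓ_2 metric unless r ∈ {1, √2, 2, 2√2}. -/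
/-- The translates of the ball `x₁² + x₂² ≤ s` by the elements of `Λ` partition `ℤ²`. -/
def BallTiling (s : ℤ) (Λ : AddSubgroup (ℤ × ℤ)) : Prop :=
  ∀ z : ℤ × ℤ, ∃! c, c ∈ Λ ∧ (z.1 - c.1) ^ 2 + (z.2 - c.2) ^ 2 ≤ s

/-- The largest `x ≤ b` with `x * x ≤ m`, where `b` is the last argument. -/
def rootBelow (m : ℕ) : ℕ → ℕ
  | 0 => 0
  | x + 1 => bif Nat.ble ((x + 1) * (x + 1)) m then x + 1 else rootBelow m x

/-- Whether `(x, y)` is the sum of the two lattice points next to `(x / 2, y / 2)` that lie on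
opposite sides of it, with both of them in the ball of squared radius `s`. -/
def halvesMeet (s x y : ℕ) : Bool :=
  Nat.ble ((x + 1) / 2 * ((x + 1) / 2) + y / 2 * (y / 2)) s &&
    Nat.ble (x / 2 * (x / 2) + (y + 1) / 2 * ((y + 1) / 2)) s

/-- Whether the ball centred at the origin and its two neighbours with parameters `β` and `±t`
are detected by `halvesMeet` not to be disjoint. -/
def pairExcluded (s n β t : ℕ) : Bool :=
  (fun H => halvesMeet s (n + 1 + H) β ||
    (fun k u =>
      (halvesMeet s (n + 1 + t) (k - β + 1 + u) ||
        halvesMeet s (t - H + (H - t)) (u + k + 1)) &&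
      (halvesMeet s (n + 1 - t) (k - β + 1 + u) || halvesMeet s (t + H) (u + k + 1)))
    (rootBelow (s - H * H) n) (rootBelow (s - t * t) n))
  (rootBelow (s - β * β) n)

lemma pairExcluded_of_lt_eight : ∀ s < 8, 5 ≤ s → ∀ β ≤ 2, ∀ t ≤ 2,
    pairExcluded s 2 β t = true := by
  decide +kernel

lemma pairExcluded_nine : ∀ β ≤ 3, ∀ t ≤ 3, pairExcluded 9 3 β t = true ∨ β = 1 ∧ t = 0 := by
  decide +kernel

lemma pairExcluded_of_lt_sixteen : ∀ s < 16, 10 ≤ s → ∀ β ≤ 3, ∀ t ≤ 3,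
    pairExcluded s 3 β t = true := by
  decide +kernel

lemma pairExcluded_sixteen : ∀ β ≤ 4, ∀ t ≤ 4, pairExcluded 16 4 β t = true ∨ β = 1 ∧ t = 0 := by
  decide +kernel

lemma pairExcluded_of_lt : ∀ n < 16, ∀ i ≤ 2 * n, 17 ≤ n * n + i → ∀ β ≤ n, ∀ t ≤ n,
    pairExcluded (n * n + i) n β t = true := by
  decide +kernel

lemma rootBelow_eq {m x : ℕ} (h₁ : x * x ≤ m) (h₂ : m < (x + 1) * (x + 1)) :
    ∀ b, x ≤ b → rootBelow m b = x
  | 0, h => by simp only [rootBelow]; omega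
  | b + 1, h => by
    rw [rootBelow]
    by_cases hb : (b + 1) * (b + 1) ≤ m
    · have : b + 1 < x + 1 := by
        by_contra hx
        have := Nat.mul_le_mul (not_lt.mp hx) (not_lt.mp hx)
        omega
      simp only [Nat.ble_eq.mpr hb, cond_true]
      omega
    · have hx : x ≠ b + 1 := by rintro rfl; exact hb h₁
      have hf : Nat.ble ((b + 1) * (b + 1)) m = false := by
        rw [← Bool.not_eq_true, Nat.ble_eq]; exact hb
      rw [hf, cond_false]
      exact rootBelow_eq h₁ h₂ b (by omega)

lemma halvesMeet_of_le {s x y : ℕ} (h : (x + 1) ^ 2 + (y + 1) ^ 2 ≤ 4 * s) :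
    halvesMeet s x y = true := by
  have hx : (x + 1) / 2 * 2 ≤ x + 1 := Nat.div_mul_le_self _ _
  have hy : (y + 1) / 2 * 2 ≤ y + 1 := Nat.div_mul_le_self _ _
  have hx' : x / 2 ≤ (x + 1) / 2 := Nat.div_le_div_right (Nat.le_succ x)
  have hy' : y / 2 ≤ (y + 1) / 2 := Nat.div_le_div_right (Nat.le_succ y)
  simp only [halvesMeet, Bool.and_eq_true, Nat.ble_eq]
  generalize (x + 1) / 2 = a at *
  generalize (y + 1) / 2 = b at *
  generalize x / 2 = a' at *
  generalize y / 2 = b' at *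
  have e₁ : (a * 2) ^ 2 ≤ (x + 1) ^ 2 := by gcongr
  have e₂ : (b * 2) ^ 2 ≤ (y + 1) ^ 2 := by gcongr
  have e₃ : a' ^ 2 ≤ a ^ 2 := by gcongr
  have e₄ : b' ^ 2 ≤ b ^ 2 := by gcongr
  have key : a ^ 2 + b' ^ 2 ≤ s := by linarith
  have key' : a' ^ 2 + b ^ 2 ≤ s := by linarith
  rw [sq, sq] at key key'
  exact ⟨key, key'⟩

namespace BallTiling

variable {s : ℤ} {Λ : AddSubgroup (ℤ × ℤ)}

lemma eq_of_mem (h : BallTiling s Λ) {c d : ℤ × ℤ} (hc : c ∈ Λ) (hd : d ∈ Λ) (x y : ℤ)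
    (hxc : (x - c.1) ^ 2 + (y - c.2) ^ 2 ≤ s) (hxd : (x - d.1) ^ 2 + (y - d.2) ^ 2 ≤ s) :
    c = d :=
  (h (x, y)).unique ⟨hc, hxc⟩ ⟨hd, hxd⟩

lemma reflect (h : BallTiling s Λ) :
    BallTiling s (Λ.comap ((AddMonoidHom.id ℤ).prodMap (-AddMonoidHom.id ℤ))) := by
  intro z
  obtain ⟨c, ⟨hc, hzc⟩, huniq⟩ := h (z.1, -z.2)
  refine ⟨(c.1, -c.2), ⟨by simpa using hc, ?_⟩, ?_⟩
  · simp only at hzc ⊢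
    nlinarith
  · rintro ⟨d₁, d₂⟩ ⟨hd, hzd⟩
    have := huniq (d₁, -d₂) ⟨by simpa using hd, by simp only at hzd ⊢; nlinarith⟩
    rw [← this]
    simp

lemma halvesMeet_eq_false {S : ℕ} (h : BallTiling S Λ) {x y : ℤ} (hv : (x, y) ∈ Λ)
    (h0 : (x, y) ≠ 0) : halvesMeet S x.natAbs y.natAbs = false := by
  rw [← Bool.not_eq_true]
  intro hm
  simp only [halvesMeet, Bool.and_eq_true, Nat.ble_eq] at hm
  obtain ⟨hm₁, hm₂⟩ := hm
  have key : ∀ x : ℤ, ∃ p : ℤ, p * p = (((x.natAbs + 1) / 2 * ((x.natAbs + 1) / 2) : ℕ) : ℤ) ∧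
      (x - p) * (x - p) = ((x.natAbs / 2 * (x.natAbs / 2) : ℕ) : ℤ) := by
    intro x
    obtain hx | hx := le_total 0 x
    · refine ⟨((x.natAbs + 1) / 2 : ℕ), by push_cast; ring, ?_⟩
      have : x - ((x.natAbs + 1) / 2 : ℕ) = (x.natAbs / 2 : ℕ) := by omega
      rw [this]; push_cast; ring
    · refine ⟨-((x.natAbs + 1) / 2 : ℕ), by push_cast; ring, ?_⟩
      have : x - -(((x.natAbs + 1) / 2 : ℕ) : ℤ) = -((x.natAbs / 2 : ℕ) : ℤ) := by omega
      rw [this]; push_cast; ring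
  obtain ⟨p, hp, hp'⟩ := key x
  obtain ⟨q, hq, hq'⟩ := key y
  zify at hm₁ hm₂
  push_cast at hp hp' hq hq'
  refine h0 (h.eq_of_mem hv Λ.zero_mem p (y - q) ?_ ?_)
  · simp only
    nlinarith
  · simp only [Prod.fst_zero, Prod.snd_zero]
    nlinarith

lemma four_mul_lt {S : ℕ} (h : BallTiling S Λ) {x y : ℤ} (hv : (x, y) ∈ Λ)
    (h0 : (x, y) ≠ 0) : 4 * (S : ℤ) < (|x| + 1) ^ 2 + (|y| + 1) ^ 2 := by
  by_contra hle
  have := h.halvesMeet_eq_false hv h0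
  rw [halvesMeet_of_le] at this
  · simp at this
  · zify
    exact not_lt.mp hle

end BallTiling

/-- Numerical data of three mutually neighbouring balls of squared radius `s`: the centres are
`0`, `(n + 1 + H, -β)` and `(n + 1 + t, k - β + 1 + u)`. -/
structure NeighbourData (s n β H k u : ℕ) (t : ℤ) : Prop where
  sq_n_le : n * n ≤ s
  lt_sq_n : s < (n + 1) * (n + 1)
  H_le : H * H + β * β ≤ s
  lt_H : s < (H + 1) * (H + 1) + β * β
  k_le : k * k + H * H ≤ s
  lt_k : s < (k + 1) * (k + 1) + H * H
  u_le : u * u + t.natAbs * t.natAbs ≤ s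
  lt_u : s < (u + 1) * (u + 1) + t.natAbs * t.natAbs

namespace NeighbourData

variable {s n β H k u : ℕ} {t : ℤ}

lemma le_k (d : NeighbourData s n β H k u t) : β ≤ k := by
  have h₁ := d.H_le
  have h₂ := d.lt_k
  by_contra hk
  nlinarith

lemma natAbs_t_le (d : NeighbourData s n β H k u t) : t.natAbs ≤ n := by
  have h₁ := d.u_le
  have h₂ := d.lt_sq_n
  by_contra hk
  nlinarith

lemma β_le (d : NeighbourData s n β H k u t) : β ≤ n := by
  have h₁ := d.H_le
  have h₂ := d.lt_sq_n
  by_contra hk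
  nlinarith

lemma rootBelow_eqs (d : NeighbourData s n β H k u t) :
    rootBelow (s - β * β) n = H ∧ rootBelow (s - H * H) n = k ∧
      rootBelow (s - t.natAbs * t.natAbs) n = u := by
  have h₁ := d.H_le
  have h₂ := d.lt_H
  have h₃ := d.k_le
  have h₄ := d.lt_k
  have h₅ := d.u_le
  have h₆ := d.lt_u
  have h₇ := d.lt_sq_n
  refine ⟨rootBelow_eq (by omega) (by omega) _ ?_, rootBelow_eq (by omega) (by omega) _ ?_,
    rootBelow_eq (by omega) (by omega) _ ?_⟩ <;> by_contra hk <;> nlinarith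

end NeighbourData

/-- Three balls as in `NeighbourData`, whose centres lie in `Λ`, cannot be detected to meet. -/
lemma BallTiling.pairExcluded_ne_true {S n β H k u : ℕ} {t : ℤ} {Λ : AddSubgroup (ℤ × ℤ)}
    (h : BallTiling S Λ) (d : NeighbourData S n β H k u t)
    (hc : ((n + 1 + H, -β) : ℤ × ℤ) ∈ Λ) (he : (n + 1 + t, (k - β + 1 + u : ℤ)) ∈ Λ) :
    ¬ pairExcluded S n β t.natAbs = true := by
  have hβ := d.le_k
  have ht := d.natAbs_t_le
  obtain ⟨eH, ek, eu⟩ := d.rootBelow_eqs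
  have hd := Λ.sub_mem he hc
  rw [Prod.mk_sub_mk] at hd
  have m₁ := h.halvesMeet_eq_false hc (by simp; omega)
  have m₂ := h.halvesMeet_eq_false he (by simp; omega)
  have m₃ := h.halvesMeet_eq_false hd (by simp; omega)
  simp only [pairExcluded, eH, ek, eu]
  rw [show ((n : ℤ) + 1 + H).natAbs = n + 1 + H by omega,
    show (-(β : ℤ)).natAbs = β by omega] at m₁
  rw [show ((k : ℤ) - β + 1 + u).natAbs = k - β + 1 + u by omega] at m₂
  rw [show ((k : ℤ) - β + 1 + u - -β).natAbs = u + k + 1 by omega] at m₃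
  obtain h0 | h0 := le_total 0 t
  · rw [show ((n : ℤ) + 1 + t).natAbs = n + 1 + t.natAbs by omega] at m₂
    rw [show ((n : ℤ) + 1 + t - (n + 1 + H)).natAbs = t.natAbs - H + (H - t.natAbs) by
      omega] at m₃
    simp [m₁, m₂, m₃]
  · rw [show ((n : ℤ) + 1 + t).natAbs = n + 1 - t.natAbs by omega] at m₂
    rw [show ((n : ℤ) + 1 + t - (n + 1 + H)).natAbs = t.natAbs + H by omega] at m₃
    simp [m₁, m₂, m₃]

/-- The neighbour of the origin that covers `(n + 1, 0)` lies below the first axis in one of two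
mirror images of `Λ`; the next ball above it along the line `x = n + 1` gives the third centre. -/
lemma BallTiling.exists_neighbours {S : ℕ} {Λ : AddSubgroup (ℤ × ℤ)} (h : BallTiling S Λ) :
    ∃ (Λ' : AddSubgroup (ℤ × ℤ)) (β H k u : ℕ) (t : ℤ), BallTiling S Λ' ∧
      NeighbourData S S.sqrt β H k u t ∧ ((S.sqrt + 1 + H, -β) : ℤ × ℤ) ∈ Λ' ∧
      (S.sqrt + 1 + t, (k - β + 1 + u : ℤ)) ∈ Λ' := by
  obtain ⟨n, hn⟩ : ∃ n, n = S.sqrt := ⟨_, rfl⟩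
  have hn₁ : n * n ≤ S := hn ▸ Nat.sqrt_le S
  have hn₂ : S < (n + 1) * (n + 1) := hn ▸ Nat.lt_succ_sqrt S
  rw [← hn]
  have hn₁' : (n * n : ℤ) ≤ S := by exact_mod_cast hn₁
  have hn₂' : (S : ℤ) < (n + 1) * (n + 1) := by exact_mod_cast hn₂
  obtain ⟨Λ', h', a, b, hb, hc, hcov⟩ : ∃ Λ', BallTiling S Λ' ∧ ∃ a b : ℤ, b ≤ 0 ∧
      (a, b) ∈ Λ' ∧ ((n : ℤ) + 1 - a) ^ 2 + (0 - b) ^ 2 ≤ S := by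
    obtain ⟨⟨a, b⟩, ⟨hc, hcov⟩, -⟩ := h (n + 1, 0)
    obtain hb | hb := le_total b 0
    · exact ⟨Λ, h, a, b, hb, hc, hcov⟩
    · exact ⟨_, h.reflect, a, -b, by omega, by simpa using hc, by simp only at hcov; linarith⟩
  obtain ⟨β, rfl⟩ : ∃ β : ℕ, b = -β := ⟨b.natAbs, by omega⟩
  have hout : (S : ℤ) < (n - a) ^ 2 + β ^ 2 := by
    by_contra hle
    have h0 := h'.eq_of_mem hc Λ'.zero_mem n 0 (by simp only; linarith)
      (by simp only [Prod.fst_zero, Prod.snd_zero]; linarith)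
    obtain ⟨rfl, hβ⟩ := Prod.mk.inj h0
    rw [hβ] at hcov
    nlinarith
  have ha : (n : ℤ) + 1 ≤ a := by nlinarith
  obtain ⟨H, rfl⟩ : ∃ H : ℕ, a = n + 1 + H := ⟨(a - (n + 1)).natAbs, by omega⟩
  have hH₁ : H * H + β * β ≤ S := by zify; linarith
  have hH₂ : S < (H + 1) * (H + 1) + β * β := by zify; linarith
  obtain ⟨k, hk⟩ : ∃ k, k = (S - H * H).sqrt := ⟨_, rfl⟩
  have hk₁ : k * k + H * H ≤ S := by
    have : k * k ≤ S - H * H := hk ▸ Nat.sqrt_le _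
    omega
  have hk₂ : S < (k + 1) * (k + 1) + H * H := by
    have : S - H * H < (k + 1) * (k + 1) := hk ▸ Nat.lt_succ_sqrt _
    omega
  obtain ⟨⟨x, y⟩, ⟨he, hcov'⟩, -⟩ := h' (n + 1, k - β + 1)
  obtain ⟨t, rfl⟩ : ∃ t : ℤ, x = n + 1 + t := ⟨x - (n + 1), by ring⟩
  obtain ⟨u, rfl⟩ : ∃ u : ℤ, y = k - β + 1 + u := ⟨y - (k - β + 1), by ring⟩
  have hu₁ : u * u + t * t ≤ S := by simp only at hcov'; linarith
  have hu₂ : S < (u + 1) * (u + 1) + t * t := by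
    by_contra hle
    have heq := h'.eq_of_mem he hc (n + 1) (k - β) (by simp only; linarith)
      (by zify at hk₁; simp only; linarith)
    obtain ⟨h₁, h₂⟩ := Prod.mk.inj heq
    obtain rfl : t = H := by omega
    obtain rfl : u = -(k + 1) := by omega
    zify at hk₂
    linarith
  have hu : 0 ≤ u := by nlinarith
  lift u to ℕ using hu
  refine ⟨Λ', β, H, k, u, t, h', ⟨hn₁, hn₂, hH₁, hH₂, hk₁, hk₂, ?_, ?_⟩, hc, he⟩
  · zify; simpa using hu₁
  · zify; simpa using hu₂

/-- The inequalities forced on three mutually neighbouring disjoint balls are inconsistent when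
the radius is at least `16`. -/
lemma false_of_large_radius {r n β H k u t : ℝ} (hr : 16 ≤ r) (hn0 : 0 ≤ n) (hn : n ≤ r)
    (hβ : 0 ≤ β) (hβk : β ≤ k) (hH : 0 ≤ H) (hu : 0 ≤ u) (hnt : -n ≤ t)
    (hHk : k ^ 2 + H ^ 2 ≤ r ^ 2) (hHβ : r ^ 2 < (H + 1) ^ 2 + β ^ 2) (htu : u ^ 2 + t ^ 2 ≤ r ^ 2)
    (h₁ : 4 * r ^ 2 < (n + 2 + H) ^ 2 + (β + 1) ^ 2)
    (h₂ : 4 * r ^ 2 < (n + 2 + t) ^ 2 + (k - β + u + 2) ^ 2)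
    (h₃ : 4 * r ^ 2 < (|t - H| + 1) ^ 2 + (u + k + 2) ^ 2) : False := by
  have hr0 : 0 ≤ r := by linarith
  have hk0 : 0 ≤ k := hβ.trans hβk
  have hrr : 16 * r ≤ r ^ 2 := by rw [sq]; exact mul_le_mul_of_nonneg_right hr hr0
  have le_of_sq : ∀ {x y : ℝ}, 0 ≤ y → x ^ 2 ≤ y ^ 2 → x ≤ y := fun hy hxy =>
    (abs_le_of_sq_le_sq' hxy hy).2
  have hHr : H ≤ r := le_of_sq hr0 (by linarith [sq_nonneg k])
  have hkr : k ≤ r := le_of_sq hr0 (by linarith [sq_nonneg H])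
  have hur : u ≤ r := le_of_sq hr0 (by linarith [sq_nonneg t])
  have htr : t ≤ r := le_of_sq hr0 (by linarith [sq_nonneg u])
  have hββ : β ^ 2 ≤ k ^ 2 := pow_le_pow_left₀ hβ hβk 2
  have hk : k ≤ 0.72 * r := by
    by_contra! hk
    have hk2 : (0.72 * r) ^ 2 ≤ k ^ 2 := pow_le_pow_left₀ (by positivity) hk.le 2
    have hH_le : H ≤ 0.694 * r := le_of_sq (by positivity) (by linarith [sq_nonneg r])
    have e₁ : (n + 2 + H) ^ 2 ≤ (r + 2 + H) ^ 2 := by gcongr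
    have e₂ : r * H ≤ r * (0.694 * r) := mul_le_mul_of_nonneg_left hH_le hr0
    linarith
  have hj : k - β ≤ 0.36 * r := by
    have : β * β ≤ k * β := mul_le_mul_of_nonneg_right hβk hβ
    exact le_of_sq (by positivity) (by linarith)
  have ht : 0.2 * r ≤ t := by
    by_contra! ht
    have e₁ : (n + 2 + t) ^ 2 ≤ (1.325 * r) ^ 2 := pow_le_pow_left₀ (by linarith) (by linarith) 2
    have e₂ : (k - β + u + 2) ^ 2 ≤ (1.485 * r) ^ 2 :=
      pow_le_pow_left₀ (by linarith) (by linarith) 2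
    linarith
  have ht2 : (0.2 * r) ^ 2 ≤ t ^ 2 := pow_le_pow_left₀ (by positivity) ht 2
  have hu' : u ≤ 0.98 * r := le_of_sq (by positivity) (by linarith)
  have hH' : 0.69 * r ≤ H + 1 := by
    have : k ^ 2 ≤ (0.72 * r) ^ 2 := pow_le_pow_left₀ hk0 hk 2
    exact le_of_sq (by positivity) (by linarith)
  obtain hH8 | hH8 := le_total H (0.8 * r)
  · have habs : |t - H| ≤ 0.6 * r := by
      rw [abs_le]
      constructor <;> linarith
    have e₁ : (|t - H| + 1) ^ 2 ≤ (0.6625 * r) ^ 2 :=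
      pow_le_pow_left₀ (by positivity) (by linarith) 2
    have e₂ : (u + k + 2) ^ 2 ≤ (1.825 * r) ^ 2 :=
      pow_le_pow_left₀ (by linarith) (by linarith) 2
    linarith
  · have hH2 : (0.8 * r) ^ 2 ≤ H ^ 2 := pow_le_pow_left₀ (by positivity) hH8 2
    have hk' : k ≤ 0.6 * r := le_of_sq (by positivity) (by linarith)
    have habs : |t - H| ≤ 0.8 * r := by
      rw [abs_le]
      constructor <;> linarith
    have e₁ : (|t - H| + 1) ^ 2 ≤ (0.8625 * r) ^ 2 :=
      pow_le_pow_left₀ (by positivity) (by linarith) 2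
    have e₂ : (u + k + 2) ^ 2 ≤ (1.705 * r) ^ 2 :=
      pow_le_pow_left₀ (by linarith) (by linarith) 2
    linarith

lemma BallTiling.lt_two_hundred_fifty_six {S : ℕ} {Λ : AddSubgroup (ℤ × ℤ)} (h : BallTiling S Λ) :
    S < 256 := by
  obtain ⟨Λ', β, H, k, u, t, h', d, hc, he⟩ := h.exists_neighbours
  generalize S.sqrt = n at d hc he
  by_contra! hS
  have hβ := d.le_k
  have ht := d.natAbs_t_le
  have hd := Λ'.sub_mem he hc
  rw [Prod.mk_sub_mk] at hd
  have m₁ := h'.four_mul_lt hc (by simp; omega)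
  have m₂ := h'.four_mul_lt he (by simp; omega)
  have m₃ := h'.four_mul_lt hd (by simp; omega)
  rw [abs_of_nonneg (by omega), abs_neg, abs_of_nonneg (by omega)] at m₁
  rw [abs_of_nonneg (by omega), abs_of_nonneg (by omega)] at m₂
  rw [show (k : ℤ) - β + 1 + u - -β = u + k + 1 by ring, abs_of_nonneg (a := (u : ℤ) + k + 1)
    (by omega), show (n : ℤ) + 1 + t - (n + 1 + H) = t - H by ring] at m₃
  have hr : √(S : ℝ) ^ 2 = S := Real.sq_sqrt (by positivity)
  have d₁ := d.k_le
  have d₂ := d.lt_H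
  have d₃ := d.u_le
  have d₄ := d.sq_n_le
  zify at d₁ d₂ d₃ d₄
  rw [abs_mul_abs_self] at d₃
  refine false_of_large_radius (r := √S) (n := n) (β := β) (H := H) (k := k) (u := u) (t := t)
    (Real.le_sqrt_of_sq_le (by norm_num; exact_mod_cast hS)) (by positivity)
    (Real.le_sqrt_of_sq_le ?_) (by positivity) (by exact_mod_cast hβ) (by positivity)
    (by positivity) ?_ ?_ ?_ ?_ ?_ ?_ ?_
  · exact_mod_cast (by linarith : (n : ℤ) ^ 2 ≤ S)
  · exact_mod_cast (by omega : -(n : ℤ) ≤ t)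
  all_goals rw [hr]
  · exact_mod_cast (by linarith : (k : ℤ) ^ 2 + H ^ 2 ≤ S)
  · exact_mod_cast (by linarith : (S : ℤ) < (H + 1) ^ 2 + β ^ 2)
  · exact_mod_cast (by linarith : (u : ℤ) ^ 2 + t ^ 2 ≤ S)
  · exact_mod_cast (by linarith : 4 * (S : ℤ) < (n + 2 + H) ^ 2 + (β + 1) ^ 2)
  · exact_mod_cast (by linarith : 4 * (S : ℤ) < (n + 2 + t) ^ 2 + (k - β + u + 2) ^ 2)
  · exact_mod_cast (by linarith : 4 * (S : ℤ) < (|t - H| + 1) ^ 2 + (u + k + 2) ^ 2)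

/-- A tiling cannot cover `z` if every ball containing `z` is equal to or meets one of the balls
centred at `c` and `d`, neither of which contains `z`. -/
lemma BallTiling.false_of_forall_halvesMeet {S : ℕ} {Λ : AddSubgroup (ℤ × ℤ)}
    (h : BallTiling S Λ) {z c d : ℤ × ℤ} (hc : c ∈ Λ) (hd : d ∈ Λ) (m : ℤ) (hm0 : 0 ≤ m)
    (hm : S < (m + 1) ^ 2)
    (hz : ∀ x ∈ Finset.Icc (-m) m, ∀ y ∈ Finset.Icc (-m) m, x ^ 2 + y ^ 2 ≤ S →
      ((z.1 - x, z.2 - y) ≠ c ∧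
        halvesMeet S (z.1 - x - c.1).natAbs (z.2 - y - c.2).natAbs = true) ∨
      ((z.1 - x, z.2 - y) ≠ d ∧
        halvesMeet S (z.1 - x - d.1).natAbs (z.2 - y - d.2).natAbs = true)) : False := by
  obtain ⟨f, ⟨hf, hcov⟩, -⟩ := h z
  have meet : ∀ e ∈ Λ, f ≠ e →
      ¬ halvesMeet S (f.1 - e.1).natAbs (f.2 - e.2).natAbs = true := fun e he hne => by
    rw [h.halvesMeet_eq_false (Λ.sub_mem hf he) (sub_ne_zero.mpr hne)]
    simp
  have := hz (z.1 - f.1) (Finset.mem_Icc.mpr (abs_le.mp (Int.lt_add_one_iff.mp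
      (abs_lt_of_sq_lt_sq (by nlinarith) (by omega)))))
    (z.2 - f.2) (Finset.mem_Icc.mpr (abs_le.mp (Int.lt_add_one_iff.mp
      (abs_lt_of_sq_lt_sq (by nlinarith) (by omega))))) hcov
  simp only [sub_sub_cancel] at this
  obtain ⟨h₁, h₂⟩ | ⟨h₁, h₂⟩ := this
  · exact meet c hc h₁ h₂
  · exact meet d hd h₁ h₂

lemma not_ballTiling_nine (Λ : AddSubgroup (ℤ × ℤ)) : ¬ BallTiling (9 : ℕ) Λ := by
  intro h
  obtain ⟨Λ', β, H, k, u, t, h', d, hc, he⟩ := h.exists_neighbours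
  rw [show Nat.sqrt 9 = 3 from Nat.sqrt_eq 3] at d hc he
  obtain hx | ⟨rfl, ht⟩ := pairExcluded_nine β d.β_le t.natAbs d.natAbs_t_le
  · exact h'.pairExcluded_ne_true d hc he hx
  · obtain ⟨rfl, rfl, rfl⟩ := d.rootBelow_eqs
    obtain rfl : t = 0 := by omega
    refine h'.false_of_forall_halvesMeet (z := (3, 1)) (c := (0, 0)) (d := (4, 5)) Λ'.zero_mem
      he 3 (by norm_num) (by norm_num) ?_
    decide +kernel

lemma not_ballTiling_sixteen (Λ : AddSubgroup (ℤ × ℤ)) : ¬ BallTiling (16 : ℕ) Λ := by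
  intro h
  obtain ⟨Λ', β, H, k, u, t, h', d, hc, he⟩ := h.exists_neighbours
  rw [show Nat.sqrt 16 = 4 from Nat.sqrt_eq 4] at d hc he
  obtain hx | ⟨rfl, ht⟩ := pairExcluded_sixteen β d.β_le t.natAbs d.natAbs_t_le
  · exact h'.pairExcluded_ne_true d hc he hx
  · obtain ⟨rfl, rfl, rfl⟩ := d.rootBelow_eqs
    obtain rfl : t = 0 := by omega
    refine h'.false_of_forall_halvesMeet (z := (1, 4)) (c := (-8, 1)) (d := (5, 6))
      (Λ'.neg_mem hc)
      he 4 (by norm_num) (by norm_num) ?_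
    decide +kernel

lemma BallTiling.radius_mem {S : ℕ} {Λ : AddSubgroup (ℤ × ℤ)} (h : BallTiling S Λ) :
    S ≤ 4 ∨ S = 8 := by
  by_contra! hS
  have h9 : S ≠ 9 := by rintro rfl; exact not_ballTiling_nine Λ h
  have h16 : S ≠ 16 := by rintro rfl; exact not_ballTiling_sixteen Λ h
  have hlt := h.lt_two_hundred_fifty_six
  obtain ⟨Λ', β, H, k, u, t, h', d, hc, he⟩ := h.exists_neighbours
  generalize S.sqrt = n at d hc he
  refine h'.pairExcluded_ne_true d hc he ?_
  have hβ := d.β_le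
  have ht := d.natAbs_t_le
  have hn₁ := d.sq_n_le
  have hn₂ := d.lt_sq_n
  have hn : n < 16 := by nlinarith
  obtain h17 | h17 := le_or_gt 17 S
  · obtain ⟨i, rfl⟩ := Nat.exists_eq_add_of_le hn₁
    exact pairExcluded_of_lt n hn i (by linarith) h17 β hβ _ ht
  · obtain h8 | h8 := lt_or_gt_of_ne hS.2
    · obtain rfl : n = 2 := by
        have : n < 3 := by nlinarith
        interval_cases n <;> omega
      exact pairExcluded_of_lt_eight S h8 (by omega) β hβ _ ht
    · obtain rfl : n = 3 := by
        have : n < 4 := lt_of_mul_self_lt_mul_self₀ (by norm_num) (by omega)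
        interval_cases n <;> omega
      exact pairExcluded_of_lt_sixteen S (by omega) (by omega) β hβ _ ht

/-- If the translates of the `ℓ_2` ball `B = {x ∈ ℤ² : x₁² + x₂² ≤ s}` by an additive
subgroup `Λ` of `ℤ²` partition `ℤ²`, then `B` is the ℓ₂ ball of squared radius
`t ∈ {1, 2, 4, 8}`: there are no linear `r`-perfect codes in `ℤ²` in the `ℓ_2` metric
unless `r ∈ {1, √2, 2, 2√2}`. -/
theorem perfect_codes_Z2_l2 (s : ℤ) (hs : 1 ≤ s) (Λ : AddSubgroup (ℤ × ℤ))
    (h : ∀ z : ℤ × ℤ, ∃! c, c ∈ Λ ∧ (z.1 - c.1) ^ 2 + (z.2 - c.2) ^ 2 ≤ s) :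
    ∃ t ∈ ({1, 2, 4, 8} : Set ℤ),
      {x : ℤ × ℤ | x.1 ^ 2 + x.2 ^ 2 ≤ s} = {x : ℤ × ℤ | x.1 ^ 2 + x.2 ^ 2 ≤ t} := by
  lift s to ℕ using by omega
  obtain hS | rfl := BallTiling.radius_mem h
  · have hS' : s = 1 ∨ s = 2 ∨ s = 3 ∨ s = 4 := by omega
    obtain rfl | rfl | rfl | rfl := hS'
    · exact ⟨1, by simp, rfl⟩
    · exact ⟨2, by simp, rfl⟩
    · refine ⟨2, by simp, Set.ext fun x => ⟨fun hx => ?_, fun hx => ?_⟩⟩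
      · simp only [Set.mem_ofPred_eq, Nat.cast_ofNat] at hx ⊢
        have h₁ : |x.1| < 2 := abs_lt_of_sq_lt_sq (by nlinarith) (by norm_num)
        have h₂ : |x.2| < 2 := abs_lt_of_sq_lt_sq (by nlinarith) (by norm_num)
        rw [← sq_abs x.1, ← sq_abs x.2]
        nlinarith [abs_nonneg x.1, abs_nonneg x.2]
      · simp only [Set.mem_ofPred_eq, Nat.cast_ofNat] at hx ⊢
        omega
    · exact ⟨4, by simp, rfl⟩
  · exact ⟨8, by simp, rfl⟩
end

section
/- Let s ≥ 1 be an integer and let B = {x ∈ ℤ³ : x₁² + x₂² + x₃² ≤ s} be the ℓ_2 ball in ℤ³ of squared radius s. If there exists an additive subgroup Λ of ℤ³ such that the translates c + B, c ∈ Λ, partition ℤ³, then B = {x ∈ ℤ³ : x₁² + x₂² + x₃² ≤ t} for some t ∈ {1, 3}. Equivalently, there are no linear r-perfect codes in ℤ³ in the ℓ_2 metric unless r ∈ {1, √3}. -/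
/-- Squared Euclidean norm on `ℤ³`. -/
def normSqZ (v : ℤ × ℤ × ℤ) : ℤ := v.1 * v.1 + v.2.1 * v.2.1 + v.2.2 * v.2.2

/-- The balls of squared radius `s` around the points of `Λ` partition `ℤ³`. -/
def IsPerfectCode (s : ℤ) (Λ : AddSubgroup (ℤ × ℤ × ℤ)) : Prop :=
  ∀ z, ∃! c, c ∈ Λ ∧ normSqZ (z - c) ≤ s

/-- `c` is a shortest nonzero vector of `Λ`. -/
def IsShortest (Λ : AddSubgroup (ℤ × ℤ × ℤ)) (c : ℤ × ℤ × ℤ) : Prop :=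
  c ∈ Λ ∧ c ≠ 0 ∧ ∀ v ∈ Λ, v ≠ 0 → normSqZ c ≤ normSqZ v

/-- No perfect linear code of squared radius `s` has `c` as a shortest vector. -/
def ExcludedShortest (s : ℤ) (c : ℤ × ℤ × ℤ) : Prop :=
  ∀ Λ, IsPerfectCode s Λ → ¬ IsShortest Λ c

section Symmetry

theorem IsPerfectCode.comap {s : ℤ} {Λ : AddSubgroup (ℤ × ℤ × ℤ)} (h : IsPerfectCode s Λ)
    (e : (ℤ × ℤ × ℤ) ≃+ (ℤ × ℤ × ℤ)) (he : ∀ v, normSqZ (e v) = normSqZ v) :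
    IsPerfectCode s (Λ.comap e.toAddMonoidHom) := by
  intro z
  obtain ⟨c, ⟨hc, hzc⟩, huniq⟩ := h (e z)
  refine ⟨e.symm c, ⟨by simpa using hc, ?_⟩, ?_⟩
  · rw [← he, map_sub]
    simpa using hzc
  · rintro d ⟨hd, hzd⟩
    rw [← he, map_sub] at hzd
    rw [← huniq (e d) ⟨hd, hzd⟩]
    simp

theorem IsShortest.comap {Λ : AddSubgroup (ℤ × ℤ × ℤ)} (e : (ℤ × ℤ × ℤ) ≃+ (ℤ × ℤ × ℤ))
    (he : ∀ v, normSqZ (e v) = normSqZ v) {c : ℤ × ℤ × ℤ} (h : IsShortest Λ (e c)) :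
    IsShortest (Λ.comap e.toAddMonoidHom) c := by
  obtain ⟨hc, hc0, hmin⟩ := h
  refine ⟨hc, fun h0 => hc0 (by simp [h0]), fun v hv hv0 => ?_⟩
  have := hmin (e v) hv (by simpa using hv0)
  rwa [he, he] at this

theorem ExcludedShortest.map {s : ℤ} {c : ℤ × ℤ × ℤ} (h : ExcludedShortest s c)
    (e : (ℤ × ℤ × ℤ) ≃+ (ℤ × ℤ × ℤ)) (he : ∀ v, normSqZ (e v) = normSqZ v) :
    ExcludedShortest s (e c) :=
  fun _ hΛ hc => h _ (hΛ.comap e he) (hc.comap e he)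

theorem ExcludedShortest.neg_fst {s a b c : ℤ} (h : ExcludedShortest s (a, b, c)) :
    ExcludedShortest s (-a, b, c) :=
  h.map ((AddEquiv.neg ℤ).prodCongr (AddEquiv.refl _)) fun v => by
    change -v.1 * -v.1 + v.2.1 * v.2.1 + v.2.2 * v.2.2 = _
    rw [neg_mul_neg, normSqZ]

theorem ExcludedShortest.rotate {s a b c : ℤ} (h : ExcludedShortest s (a, b, c)) :
    ExcludedShortest s (b, c, a) :=
  h.map (AddEquiv.prodComm.trans AddEquiv.prodAssoc) fun v => by
    change v.2.1 * v.2.1 + v.2.2 * v.2.2 + v.1 * v.1 = _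
    rw [normSqZ]
    ring

theorem ExcludedShortest.swap {s a b c : ℤ} (h : ExcludedShortest s (a, b, c)) :
    ExcludedShortest s (a, c, b) :=
  h.map ((AddEquiv.refl _).prodCongr AddEquiv.prodComm) fun v => by
    change v.1 * v.1 + v.2.2 * v.2.2 + v.2.1 * v.2.1 = _
    rw [normSqZ, add_right_comm]

theorem ExcludedShortest.of_abs_fst {s a b c : ℤ} (h : ExcludedShortest s (|a|, b, c)) :
    ExcludedShortest s (a, b, c) := by
  rcases abs_choice a with ha | ha
  · rwa [ha] at h
  · rw [ha] at h
    simpa using h.neg_fst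

theorem ExcludedShortest.of_abs {s a b c : ℤ} (h : ExcludedShortest s (|a|, |b|, |c|)) :
    ExcludedShortest s (a, b, c) :=
  (h.of_abs_fst.rotate.of_abs_fst.rotate.of_abs_fst).rotate

/-- Up to symmetry, a shortest vector has nonnegative and nonincreasing coordinates. -/
theorem excludedShortest_of_sorted {s : ℤ}
    (h : ∀ a b c : ℤ, 0 ≤ c → c ≤ b → b ≤ a → ExcludedShortest s (a, b, c)) (v : ℤ × ℤ × ℤ) :
    ExcludedShortest s v := by
  obtain ⟨a, b, c⟩ := v
  apply ExcludedShortest.of_abs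
  have ha := abs_nonneg a
  have hb := abs_nonneg b
  have hc := abs_nonneg c
  rcases le_total |a| |b| with hab | hab <;> rcases le_total |b| |c| with hbc | hbc <;>
    rcases le_total |a| |c| with hac | hac
  · exact (h _ _ _ ha hab hbc).swap.rotate
  · exact (h _ _ _ ha hab hbc).swap.rotate
  · exact (h _ _ _ ha hac hbc).rotate.rotate
  · exact (h _ _ _ hc hac hab).swap.rotate.rotate
  · exact (h _ _ _ hb hab hac).rotate
  · exact (h _ _ _ hb hbc hac).swap
  · exact h _ _ _ hc hbc hab
  · exact h _ _ _ hc hbc hab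

end Symmetry

section Waist

variable {s : ℤ} {Λ : AddSubgroup (ℤ × ℤ × ℤ)}

theorem IsPerfectCode.lt_max (h : IsPerfectCode s Λ) {c : ℤ × ℤ × ℤ} (hc : c ∈ Λ) (hc0 : c ≠ 0)
    (x : ℤ × ℤ × ℤ) : s < max (normSqZ x) (normSqZ (x - c)) := by
  by_contra! hx
  rw [max_le_iff] at hx
  exact hc0 ((h x).unique ⟨hc, hx.2⟩ ⟨Λ.zero_mem, by simpa using hx.1⟩)

/-- An integer point close to `c / 2`, with `c` sorted, witnessing that the balls around `0` and `c`
meet as soon as `s` is not much smaller than `‖c‖² / 4`. -/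
def halfPoint (c : ℤ × ℤ × ℤ) : ℤ × ℤ × ℤ :=
  (c.1 / 2, (c.2.1 + 1) / 2, if c.1 % 2 = 0 then c.2.2 / 2 else (c.2.2 + 1) / 2)

/-- A strict upper bound for `s` when `c` is in the code. -/
def radiusBound (c : ℤ × ℤ × ℤ) : ℤ :=
  max (normSqZ (halfPoint c)) (normSqZ (halfPoint c - c))

/-- An integer point near `c / 2 + 3 / 10 * (-c₂, c₁, 0)`. -/
def waistPoint (c : ℤ × ℤ × ℤ) : ℤ × ℤ × ℤ :=
  ((5 * c.1 - 3 * c.2.1 + 5) / 10, (5 * c.2.1 + 3 * c.1 + 5) / 10, c.2.2 / 2)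

/-- A point `z` outside of the balls around `0` and `c` is covered by a third one, whose centre `v`
has distance at least `√3 / 2 * ‖c‖` from `c / 2`. -/
theorem exists_third_center (h : IsPerfectCode s Λ) {c : ℤ × ℤ × ℤ} (hc : IsShortest Λ c)
    {z : ℤ × ℤ × ℤ} (hz : s < normSqZ z) (hzc : s < normSqZ (z - c)) :
    ∃ v, normSqZ (z - v) ≤ s ∧ 3 * normSqZ c ≤ normSqZ (2 * v - c) := by
  obtain ⟨v, ⟨hv, hzv⟩, -⟩ := h z
  refine ⟨v, hzv, ?_⟩
  have h0 : v ≠ 0 := by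
    rintro rfl
    rw [sub_zero] at hzv
    exact hz.not_ge hzv
  have h1 : v - c ≠ 0 := by
    intro h1
    rw [sub_eq_zero.1 h1] at hzv
    exact hzc.not_ge hzv
  have h2 := hc.2.2 v hv h0
  have h3 := hc.2.2 (v - c) (Λ.sub_mem hv hc.1) h1
  have h4 : normSqZ (2 * v - c) = 2 * normSqZ v + 2 * normSqZ (v - c) - normSqZ c := by
    simp only [normSqZ, Prod.fst_sub, Prod.snd_sub, Prod.fst_mul, Prod.snd_mul, Prod.fst_ofNat,
      Prod.snd_ofNat]
    ring
  linarith

/-- The numerical condition on `z` under which `exists_third_center` is contradictory. -/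
def IsWaistWitness (c z : ℤ × ℤ × ℤ) : Prop :=
  let m := radiusBound c
  let d := normSqZ (z + z - c)
  let q := 3 * normSqZ c - d - 4 * (m - 1)
  m ≤ normSqZ z ∧ m ≤ normSqZ (z - c) ∧ 0 < q ∧ 16 * d * (m - 1) < q * q

instance (c z : ℤ × ℤ × ℤ) : Decidable (IsWaistWitness c z) := by
  unfold IsWaistWitness
  infer_instance

theorem normSqZ_nonneg (v : ℤ × ℤ × ℤ) : 0 ≤ normSqZ v := by
  unfold normSqZ
  linarith [mul_self_nonneg v.1, mul_self_nonneg v.2.1, mul_self_nonneg v.2.2]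

theorem IsWaistWitness.excludedShortest {c z : ℤ × ℤ × ℤ} (hw : IsWaistWitness c z) :
    ExcludedShortest s c := by
  intro Λ h hc
  have hs : s < radiusBound c := h.lt_max hc.1 hc.2.1 _
  obtain ⟨hz, hzc, hq, hlt⟩ := hw
  obtain ⟨v, hv, hfar⟩ := exists_third_center h hc (hs.trans_le hz) (hs.trans_le hzc)
  have hd := normSqZ_nonneg (z + z - c)
  generalize radiusBound c = m at *
  have hle : 3 * normSqZ c - normSqZ (z + z - c) - 4 * (m - 1) ≤
      normSqZ (2 * v - c) - normSqZ (z + z - c) - 4 * normSqZ (z - v) := by linarith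
  have hcs : (normSqZ (2 * v - c) - normSqZ (z + z - c) - 4 * normSqZ (z - v)) ^ 2 ≤
      16 * normSqZ (z + z - c) * normSqZ (z - v) := by
    obtain ⟨c₁, c₂, c₃⟩ := c
    obtain ⟨z₁, z₂, z₃⟩ := z
    obtain ⟨v₁, v₂, v₃⟩ := v
    simp only [normSqZ, Prod.fst_sub, Prod.snd_sub, Prod.fst_mul, Prod.snd_mul, Prod.fst_ofNat,
      Prod.snd_ofNat, Prod.fst_add, Prod.snd_add]
    obtain ⟨x, hx⟩ : ∃ x, x = v₁ - z₁ := ⟨_, rfl⟩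
    obtain ⟨y, hy⟩ : ∃ y, y = v₂ - z₂ := ⟨_, rfl⟩
    obtain ⟨w, hw⟩ : ∃ w, w = v₃ - z₃ := ⟨_, rfl⟩
    obtain rfl : v₁ = x + z₁ := by linarith
    obtain rfl : v₂ = y + z₂ := by linarith
    obtain rfl : v₃ = w + z₃ := by linarith
    nlinarith [sq_nonneg (x * (z₂ + z₂ - c₂) - y * (z₁ + z₁ - c₁)),
      sq_nonneg (x * (z₃ + z₃ - c₃) - w * (z₁ + z₁ - c₁)),
      sq_nonneg (y * (z₃ + z₃ - c₃) - w * (z₂ + z₂ - c₂))]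
  have h1 := mul_self_le_mul_self hq.le hle
  have h2 : 16 * normSqZ (z + z - c) * normSqZ (z - v) ≤ 16 * normSqZ (z + z - c) * (m - 1) :=
    mul_le_mul_of_nonneg_left (by linarith) (by linarith)
  nlinarith

theorem four_mul_le_of_shortest (h : IsPerfectCode s Λ) {a b c : ℤ} (hc : 0 ≤ c) (hcb : c ≤ b)
    (hba : b ≤ a) (hmem : IsShortest Λ (a, b, c)) :
    4 * s ≤ a * a + b * b + c * c + 2 * a + 2 := by
  have hs := h.lt_max hmem.1 hmem.2.1 (halfPoint (a, b, c))
  rw [lt_max_iff] at hs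
  simp only [normSqZ, halfPoint, Prod.fst_sub, Prod.snd_sub] at hs
  rcases Int.even_or_odd' a with ⟨i, rfl | rfl⟩ <;>
    rcases Int.even_or_odd' b with ⟨j, rfl | rfl⟩ <;>
    rcases Int.even_or_odd' c with ⟨k, rfl | rfl⟩ <;>
    simp only [show (2 * i) / 2 = i by omega, show (2 * i + 1) / 2 = i by omega,
      show (2 * j + 1) / 2 = j by omega,
      show (2 * j + 1 + 1) / 2 = j + 1 by omega, show (2 * k) / 2 = k by omega,
      show (2 * k + 1) / 2 = k by omega, show (2 * k + 1 + 1) / 2 = k + 1 by omega,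
      show (2 * i) % 2 = 0 by omega, show (2 * i + 1) % 2 = 1 by omega, if_true, one_ne_zero,
      if_false] at hs <;>
    rcases hs with hs | hs <;> nlinarith

theorem excludedShortest_of_large {a b c : ℤ} (hc : 0 ≤ c) (hcb : c ≤ b) (hba : b ≤ a)
    (ha : 18 ≤ a) : ExcludedShortest s (a, b, c) := by
  intro Λ h hmem
  have hs := four_mul_le_of_shortest h hc hcb hba hmem
  obtain ⟨x, hx⟩ : ∃ x, x = (5 * a - 3 * b + 5) / 10 := ⟨_, rfl⟩
  obtain ⟨y, hy⟩ : ∃ y, y = (5 * b + 3 * a + 5) / 10 := ⟨_, rfl⟩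
  obtain ⟨w, hw⟩ : ∃ w, w = c / 2 := ⟨_, rfl⟩
  obtain ⟨α, hα⟩ : ∃ α, α = 5 * (2 * x - a) + 3 * b := ⟨_, rfl⟩
  obtain ⟨β, hβ⟩ : ∃ β, β = 5 * (2 * y - b) - 3 * a := ⟨_, rfl⟩
  obtain ⟨ε, hε⟩ : ∃ ε, ε = c - 2 * w := ⟨_, rfl⟩
  have hα₁ : -5 ≤ α := by omega
  have hα₂ : α ≤ 5 := by omega
  have hβ₁ : -5 ≤ β := by omega
  have hβ₂ : β ≤ 5 := by omega
  have hε₁ : 0 ≤ ε := by omega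
  have hε₂ : ε ≤ 1 := by omega
  have hb : 0 ≤ b := hc.trans hcb
  have ha0 : 0 ≤ a := hb.trans hba
  have hbound : ∀ {u t : ℤ}, 0 ≤ u → -5 ≤ t → t ≤ 5 → -(5 * u) ≤ u * t ∧ u * t ≤ 5 * u :=
    fun hu h₁ h₂ => ⟨by linarith only [mul_le_mul_of_nonneg_left h₁ hu],
      by linarith only [mul_le_mul_of_nonneg_left h₂ hu]⟩
  obtain ⟨haα₁, haα₂⟩ := hbound ha0 hα₁ hα₂
  obtain ⟨hbα₁, hbα₂⟩ := hbound hb hα₁ hα₂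
  obtain ⟨haβ₁, haβ₂⟩ := hbound ha0 hβ₁ hβ₂
  obtain ⟨hbβ₁, hbβ₂⟩ := hbound hb hβ₁ hβ₂
  have hcε₁ : 0 ≤ c * ε := mul_nonneg hc hε₁
  have hcε₂ : c * ε ≤ c := mul_le_of_le_one_right hc hε₂
  have hα₃ : α * α ≤ 25 := by nlinarith only [hα₁, hα₂]
  have hβ₃ : β * β ≤ 25 := by nlinarith only [hβ₁, hβ₂]
  have hε₃ : ε * ε ≤ 1 := by nlinarith only [hε₁, hε₂]
  have hd : 25 * ((2 * x - a) ^ 2 + (2 * y - b) ^ 2 + (2 * w - c) ^ 2) =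
      9 * (a * a + b * b) - 6 * (b * α) + 6 * (a * β) + α * α + β * β + 25 * (ε * ε) := by
    rw [hα, hβ, hε]; ring
  have hi : 5 * (a * (2 * x - a) + b * (2 * y - b) + c * (2 * w - c)) =
      a * α + b * β - 5 * (c * ε) := by
    rw [hα, hβ, hε]; ring
  have hb65 := sq_nonneg (9 * b - 65)
  have hb4 := sq_nonneg (b - 4)
  have haa : 18 * a ≤ a * a := mul_le_mul_of_nonneg_right ha ha0
  have hlower : 130 * a + 80 * b + 50 * c + 75 ≤ 9 * (a * a + b * b) := by
    linarith only [hb65, haa, ha, hcb]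
  have hupper : 480 * a + 240 * b + 840 < 33 * (a * a + b * b) := by
    linarith only [hb4, haa, ha, hb]
  have hα0 := mul_self_nonneg α
  have hβ0 := mul_self_nonneg β
  have hε0 := mul_self_nonneg ε
  have hz : s < normSqZ (x, y, w) := by
    simp only [normSqZ]
    linarith only [hs, hd, hi, hlower, haα₁, hbα₂, haβ₁, hbβ₁, hcε₂, hα0, hβ0, hε0]
  have hzc : s < normSqZ ((x, y, w) - (a, b, c)) := by
    simp only [normSqZ, Prod.fst_sub, Prod.snd_sub]
    linarith only [hs, hd, hi, hlower, haα₂, hbα₂, haβ₁, hbβ₂, hcε₁, hα0, hβ0, hε0, hc]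
  obtain ⟨⟨p, q, r⟩, hv, hfar⟩ := exists_third_center h hmem hz hzc
  simp only [normSqZ, Prod.fst_sub, Prod.snd_sub, Prod.fst_mul, Prod.snd_mul, Prod.fst_ofNat,
      Prod.snd_ofNat] at hv hfar
  have hyoung : 15 * ((2 * p - a) * (2 * p - a) + (2 * q - b) * (2 * q - b) +
      (2 * r - c) * (2 * r - c)) ≤
      24 * (4 * ((x - p) * (x - p) + (y - q) * (y - q) + (w - r) * (w - r))) +
      40 * ((2 * x - a) ^ 2 + (2 * y - b) ^ 2 + (2 * w - c) ^ 2) := by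
    linarith only [sq_nonneg (3 * (2 * (p - x)) - 5 * (2 * x - a)),
      sq_nonneg (3 * (2 * (q - y)) - 5 * (2 * y - b)),
      sq_nonneg (3 * (2 * (r - w)) - 5 * (2 * w - c))]
  linarith only [mul_self_nonneg c, hs, hv, hfar, hyoung, hd, hupper, hbα₁, haβ₂, hα₃, hβ₃, hε₃]

end Waist

section Refutation

/-- The points of the ball of squared radius `S`, provided that `S < (R + 1)²`. -/
def ballPoints (S : ℤ) (R : ℕ) : List (ℤ × ℤ × ℤ) :=
  let I := (List.range (2 * R + 1)).map fun i : ℕ => (i : ℤ) - R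
  (I.flatMap fun x => I.flatMap fun y => I.map fun z => (x, y, z)).filter (normSqZ · ≤ S)

theorem mem_ballPoints {S : ℤ} {R : ℕ} (hR : S < (R + 1) ^ 2) {v : ℤ × ℤ × ℤ}
    (hv : normSqZ v ≤ S) : v ∈ ballPoints S R := by
  have key : ∀ x : ℤ, x * x ≤ S → x ∈ (List.range (2 * R + 1)).map fun i : ℕ => (i : ℤ) - R := by
    intro x hx
    simp only [List.mem_map, List.mem_range]
    have := abs_le_of_sq_le_sq' (a := x) (b := (R : ℤ)) ?_ (by positivity)
    · exact ⟨(x + R).toNat, by omega, by omega⟩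
    · have h1 : |x| < (R : ℤ) + 1 := abs_lt_of_sq_lt_sq (by nlinarith) (by positivity)
      rw [← sq_abs x]
      have := abs_nonneg x
      gcongr
      omega
  obtain ⟨x, y, z⟩ := v
  have hv' := hv
  simp only [normSqZ] at hv'
  have hx := key x (by nlinarith [mul_self_nonneg y, mul_self_nonneg z])
  have hy := key y (by nlinarith [mul_self_nonneg x, mul_self_nonneg z])
  have hz := key z (by nlinarith [mul_self_nonneg x, mul_self_nonneg y])
  simp only [ballPoints, List.mem_filter, List.mem_flatMap, decide_eq_true_eq]
  exact ⟨⟨x, hx, y, hy, List.mem_map_of_mem hz⟩, hv⟩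

/-- A sufficient test for the balls of squared radius `s` around `0` and `d` to meet. -/
def ballsMeet (s : ℤ) (d : ℤ × ℤ × ℤ) : Bool :=
  [d.1 / 2, (d.1 + 1) / 2].any fun x => [d.2.1 / 2, (d.2.1 + 1) / 2].any fun y =>
    [d.2.2 / 2, (d.2.2 + 1) / 2].any fun z => normSqZ (x, y, z) ≤ s && normSqZ ((x, y, z) - d) ≤ s

theorem exists_of_ballsMeet {s : ℤ} {d : ℤ × ℤ × ℤ} (h : ballsMeet s d) :
    ∃ x, normSqZ x ≤ s ∧ normSqZ (x - d) ≤ s := by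
  simp only [ballsMeet, List.any_eq_true, Bool.and_eq_true, decide_eq_true_eq] at h
  obtain ⟨x, -, y, -, z, -, h⟩ := h
  exact ⟨_, h⟩

/-- `v` cannot lie in a code of minimal squared distance `n` and squared radius at least `s` that
contains the points of `L`. -/
def clashes (s n : ℤ) (L : List (ℤ × ℤ × ℤ)) (v : ℤ × ℤ × ℤ) : Bool :=
  (L.any fun l => normSqZ (v - l) < n && v - l != 0) ||
    L.any fun l => ballsMeet s (v - l) && v - l != 0

/-- Exhaustive search for the centres covering the given points one after the other, in a code that
contains the points of `L`. -/
def refutes (s S : ℤ) (R : ℕ) (n : ℤ) : List (ℤ × ℤ × ℤ) → List (ℤ × ℤ × ℤ) → Bool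
  | [], _ => false
  | z :: zs, L => (ballPoints S R).all fun b =>
      clashes s n L (z + b) ||
        refutes s S R n zs (L ++ L.map (· + (z + b)) ++ L.map (· - (z + b)))

theorem not_refutes {t s S : ℤ} {R : ℕ} {Λ : AddSubgroup (ℤ × ℤ × ℤ)} {c : ℤ × ℤ × ℤ}
    (h : IsPerfectCode s Λ) (hc : IsShortest Λ c) (hts : t ≤ s) (hsS : s ≤ S)
    (hR : S < (R + 1) ^ 2) (zs L : List (ℤ × ℤ × ℤ)) (hL : ∀ l ∈ L, l ∈ Λ) :
    ¬ refutes t S R (normSqZ c) zs L := by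
  induction zs generalizing L with
  | nil => simp [refutes]
  | cons z zs ih =>
    intro hr
    obtain ⟨v, ⟨hv, hzv⟩, -⟩ := h z
    have hball : v - z ∈ ballPoints S R := by
      apply mem_ballPoints hR
      have : normSqZ (v - z) = normSqZ (z - v) := by
        simp only [normSqZ, Prod.fst_sub, Prod.snd_sub]
        ring
      omega
    simp only [refutes, List.all_eq_true] at hr
    have hr := hr _ hball
    rw [add_sub_cancel, Bool.or_eq_true] at hr
    rcases hr with hr | hr
    · simp only [clashes, List.any_eq_true, Bool.and_eq_true, bne_iff_ne, Bool.or_eq_true,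
        decide_eq_true_eq] at hr
      rcases hr with ⟨l, hl, hlt, hne⟩ | ⟨l, hl, hmeet, hne⟩
      · exact hlt.not_ge (hc.2.2 _ (Λ.sub_mem hv (hL l hl)) hne)
      · obtain ⟨x, hx, hx'⟩ := exists_of_ballsMeet hmeet
        have := h.lt_max (Λ.sub_mem hv (hL l hl)) hne x
        rw [lt_max_iff] at this
        omega
    · refine ih _ ?_ hr
      intro l hl
      simp only [List.mem_append, List.mem_map] at hl
      rcases hl with (hl | ⟨l, hl, rfl⟩) | ⟨l, hl, rfl⟩
      · exact hL l hl
      · exact Λ.add_mem (hL l hl) hv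
      · exact Λ.sub_mem (hL l hl) hv

/-- Data of an exhaustive search: it excludes `vec` as a shortest vector of a perfect code whose
squared radius is between `lower` and `upper`. -/
structure SearchCase where
  vec : ℤ × ℤ × ℤ
  lower : ℤ
  upper : ℤ
  side : ℕ
  points : List (ℤ × ℤ × ℤ)

/-- The search succeeds. -/
def SearchCase.succeeds (e : SearchCase) : Bool :=
  e.upper < (e.side + 1) ^ 2 &&
    refutes e.lower e.upper e.side (normSqZ e.vec) e.points [0, e.vec, -e.vec]

theorem SearchCase.excludedShortest {e : SearchCase} (he : e.succeeds) {s : ℤ} (h₁ : e.lower ≤ s)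
    (h₂ : s ≤ e.upper) : ExcludedShortest s e.vec := by
  intro Λ h hc
  simp only [SearchCase.succeeds, Bool.and_eq_true, decide_eq_true_eq] at he
  refine not_refutes h hc h₁ h₂ he.1 _ _ ?_ he.2
  simp [hc.1]

/-- The shortest vectors that need an exhaustive search. -/
def searchCases : List SearchCase :=
  [⟨(3, 0, 0), 2, 2, 1, [(-2, -1, -1), (1, 1, 1)]⟩,
   ⟨(2, 2, 1), 2, 2, 1, [(-2, 0, -1), (0, 2, 1), (1, 1, -1)]⟩,
   ⟨(3, 1, 0), 2, 2, 1, [(1, 1, -1)]⟩,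
   ⟨(3, 1, 1), 2, 2, 1, [(1, 1, 1)]⟩,
   ⟨(3, 2, 0), 2, 2, 1, [(1, 1, -1)]⟩,
   ⟨(3, 2, 0), 4, 4, 2, [(-2, 0, -1), (1, 2, 1), (1, 3, 0)]⟩,
   ⟨(3, 2, 2), 2, 4, 2, [(0, 1, 2)]⟩,
   ⟨(3, 2, 2), 5, 5, 2, [(-3, 0, 0), (1, 1, 3), (2, -1, 1)]⟩,
   ⟨(3, 3, 1), 2, 5, 2, [(1, 1, 2)]⟩,
   ⟨(4, 3, 0), 2, 7, 2, [(1, 3, 0)]⟩,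
   ⟨(5, 0, 0), 2, 7, 2, [(2, -2, -1)]⟩,
   ⟨(5, 0, 0), 8, 8, 2, [(-3, -2, -1), (2, -1, -2)]⟩,
   ⟨(5, 1, 0), 2, 7, 2, [(2, 0, -2)]⟩,
   ⟨(5, 1, 0), 8, 8, 2, [(-3, 0, -2), (2, 2, -1)]⟩,
   ⟨(3, 3, 3), 2, 7, 2, [(0, 2, 2)]⟩,
   ⟨(3, 3, 3), 8, 8, 2, [(-3, -2, 0), (0, 2, 3)]⟩,
   ⟨(5, 2, 0), 2, 8, 2, [(2, 1, -2)]⟩,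
   ⟨(5, 2, 0), 9, 9, 3, [(2, 3, 0)]⟩,
   ⟨(5, 2, 1), 2, 9, 3, [(2, 2, 2)]⟩,
   ⟨(5, 2, 2), 2, 9, 3, [(2, 1, 3)]⟩,
   ⟨(5, 2, 2), 10, 10, 3, [(2, 1, 3)]⟩,
   ⟨(5, 4, 0), 2, 11, 3, [(1, 4, 0)]⟩,
   ⟨(5, 4, 0), 12, 12, 3, [(1, 4, 0)]⟩,
   ⟨(7, 0, 0), 2, 13, 3, [(3, -2, -1)]⟩,
   ⟨(7, 0, 0), 14, 15, 3, [(3, -2, -2)]⟩,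
   ⟨(7, 1, 0), 2, 15, 3, [(3, 3, 0)]⟩,
   ⟨(7, 1, 1), 2, 15, 3, [(3, 2, 2)]⟩,
   ⟨(5, 5, 5), 2, 21, 4, [(0, 3, 4)]⟩,
   ⟨(9, 0, 0), 2, 24, 4, [(4, -3, 0)]⟩,
   ⟨(9, 4, 0), 2, 28, 5, [(4, 3, -2)]⟩,
   ⟨(11, 0, 0), 2, 35, 5, [(5, -3, -2)]⟩]

theorem searchCases_succeed : searchCases.all SearchCase.succeeds = true := by
  decide +kernel

/-- `c` is excluded by an explicit witness or, for all relevant `s`, by a search. -/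
def isHandled (c : ℤ × ℤ × ℤ) : Bool :=
  ([(0, 0, 0), (0, 0, 1), (0, -1, 1), (1, -1, -1), (-1, 0, 1), (1, 0, -1), (-1, 0, 0)].any
    fun o => IsWaistWitness c (waistPoint c + o)) ||
  (List.range (radiusBound c).toNat).all fun s =>
    s < 2 || s == 3 || searchCases.any fun e => e.vec == c && e.lower ≤ s && s ≤ e.upper

theorem isHandled_of_lt :
    ∀ a < 18, ∀ b < a + 1, ∀ c < b + 1, isHandled ((a : ℕ), (b : ℕ), (c : ℕ)) := by
  decide +kernel

theorem excludedShortest_of_small {s : ℤ} (hs : 2 ≤ s) (hs3 : s ≠ 3) {a b c : ℤ} (hc : 0 ≤ c)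
    (hcb : c ≤ b) (hba : b ≤ a) (ha : a < 18) : ExcludedShortest s (a, b, c) := by
  have hh := isHandled_of_lt a.toNat (by omega) b.toNat (by omega) c.toNat (by omega)
  rw [Int.toNat_of_nonneg (by omega), Int.toNat_of_nonneg (by omega), Int.toNat_of_nonneg hc,
    isHandled, Bool.or_eq_true] at hh
  rcases hh with hh | hh
  · simp only [List.any_eq_true, decide_eq_true_eq] at hh
    obtain ⟨o, -, ho⟩ := hh
    exact ho.excludedShortest
  · intro Λ h hmem
    have hlt : s < radiusBound (a, b, c) := h.lt_max hmem.1 hmem.2.1 _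
    rw [List.all_eq_true] at hh
    have := hh s.toNat (by rw [List.mem_range]; omega)
    simp only [Bool.or_eq_true, decide_eq_true_eq, beq_iff_eq, List.any_eq_true,
      Bool.and_eq_true] at this
    rcases this with (h2 | h3) | ⟨e, he, ⟨hv, h₁⟩, h₂⟩
    · omega
    · omega
    · exact SearchCase.excludedShortest (List.all_eq_true.1 searchCases_succeed e he) (by omega)
        (by omega) Λ h (hv ▸ hmem)

end Refutation

theorem excludedShortest_of_two_le {s : ℤ} (hs : 2 ≤ s) (hs3 : s ≠ 3) (c : ℤ × ℤ × ℤ) :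
    ExcludedShortest s c := by
  refine excludedShortest_of_sorted (fun a b c hc hcb hba => ?_) c
  rcases lt_or_ge a 18 with ha | ha
  · exact excludedShortest_of_small hs hs3 hc hcb hba ha
  · exact excludedShortest_of_large hc hcb hba ha

theorem IsPerfectCode.exists_isShortest {s : ℤ} {Λ : AddSubgroup (ℤ × ℤ × ℤ)}
    (h : IsPerfectCode s Λ) (hs : 0 ≤ s) : ∃ c, IsShortest Λ c := by
  have hne : {v : ℤ × ℤ × ℤ | v ∈ Λ ∧ v ≠ 0}.Nonempty := by
    obtain ⟨v, ⟨hv, hzv⟩, -⟩ := h (s + 1, 0, 0)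
    refine ⟨v, hv, ?_⟩
    rintro rfl
    simp only [normSqZ, sub_zero] at hzv
    nlinarith
  obtain ⟨c, ⟨hc, hc0⟩, hmin⟩ := exists_minimalFor_of_wellFoundedLT
    (fun v : ℤ × ℤ × ℤ => v ∈ Λ ∧ v ≠ 0) (fun v => (normSqZ v).toNat) hne
  refine ⟨c, hc, hc0, fun v hv hv0 => ?_⟩
  have h1 := normSqZ_nonneg v
  have h2 := normSqZ_nonneg c
  by_contra! hlt
  have := hmin ⟨hv, hv0⟩ (by simp only; omega)
  simp only at this
  omega

theorem IsPerfectCode.eq_one_or_three {s : ℤ} {Λ : AddSubgroup (ℤ × ℤ × ℤ)}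
    (h : IsPerfectCode s Λ) (hs : 1 ≤ s) : s = 1 ∨ s = 3 := by
  by_contra! hne
  obtain ⟨c, hc⟩ := h.exists_isShortest (by omega)
  exact excludedShortest_of_two_le (by omega) hne.2 c Λ h hc

/-- The identification of `ℤ × ℤ × ℤ` with `Fin 3 → ℤ`. -/
def tripleToFun : (ℤ × ℤ × ℤ) →+ (Fin 3 → ℤ) where
  toFun v := ![v.1, v.2.1, v.2.2]
  map_zero' := by simp
  map_add' v w := by simp

theorem isPerfectCode_comap_tripleToFun {s : ℤ} {Λ : AddSubgroup (Fin 3 → ℤ)}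
    (h : ∀ z : Fin 3 → ℤ, ∃! c, c ∈ Λ ∧
        (z 0 - c 0) ^ 2 + (z 1 - c 1) ^ 2 + (z 2 - c 2) ^ 2 ≤ s) :
    IsPerfectCode s (Λ.comap tripleToFun) := by
  intro z
  obtain ⟨c, ⟨hc, hzc⟩, huniq⟩ := h (tripleToFun z)
  have hcc : tripleToFun (c 0, c 1, c 2) = c := by
    ext i
    fin_cases i <;> rfl
  refine ⟨(c 0, c 1, c 2), ⟨by simpa [hcc] using hc, ?_⟩, ?_⟩
  · simpa [normSqZ, tripleToFun, sq] using hzc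
  · rintro d ⟨hd, hzd⟩
    have := huniq (tripleToFun d) ⟨hd, by simpa [normSqZ, tripleToFun, sq] using hzd⟩
    rw [← this]
    rfl

/-- If the translates of the `ℓ_2` ball `B = {x ∈ ℤ³ : x₁² + x₂² + x₃² ≤ s}` by an
additive subgroup `Λ` of `ℤ³` partition `ℤ³`, then `B` is the ℓ₂ ball of squared radius
`t ∈ {1, 3}`: there are no linear `r`-perfect codes in `ℤ³` in the `ℓ_2` metric unless
`r ∈ {1, √3}`. -/
theorem perfect_codes_Z3_l2 (s : ℤ) (hs : 1 ≤ s) (Λ : AddSubgroup (Fin 3 → ℤ))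
    (h : ∀ z : Fin 3 → ℤ, ∃! c, c ∈ Λ ∧
        (z 0 - c 0) ^ 2 + (z 1 - c 1) ^ 2 + (z 2 - c 2) ^ 2 ≤ s) :
    ∃ t ∈ ({1, 3} : Set ℤ),
      {x : Fin 3 → ℤ | (x 0) ^ 2 + (x 1) ^ 2 + (x 2) ^ 2 ≤ s} =
      {x : Fin 3 → ℤ | (x 0) ^ 2 + (x 1) ^ 2 + (x 2) ^ 2 ≤ t} := by
  refine ⟨s, ?_, rfl⟩
  simpa using (isPerfectCode_comap_tripleToFun h).eq_one_or_three hs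
end

section
/- Let Λ = {(x, y) ∈ ℤ² : x + 5y ≡ 0 (mod 13)}. Then for every real p with 1 ≤ p < ∞, the translates c + B_p²(2), c ∈ Λ, partition ℤ², where B_p²(2) = {x ∈ ℤ² : |x₁|^p + |x₂|^p ≤ 2^p}; that is, Λ is a linear 2-perfect code in ℤ² in the ℓ_p metric for every 1 ≤ p < ∞. -/
/-- For `p ≥ 1`, the integer points of the planar `ℓ_p` ball of radius `2` are those of the
`ℓ_1` ball of radius `2`. -/
theorem abs_rpow_add_abs_rpow_le_two_rpow_iff {p : ℝ} (hp : 1 ≤ p) (a b : ℤ) :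
    |(a : ℝ)| ^ p + |(b : ℝ)| ^ p ≤ 2 ^ p ↔ |a| + |b| ≤ 2 := by
  have hp0 : 0 < p := by linarith
  obtain ⟨m, hm⟩ := Int.eq_ofNat_of_zero_le (abs_nonneg a)
  obtain ⟨n, hn⟩ := Int.eq_ofNat_of_zero_le (abs_nonneg b)
  have hm' : |(a : ℝ)| = m := by exact_mod_cast hm
  have hn' : |(b : ℝ)| = n := by exact_mod_cast hn
  rw [hm, hn, hm', hn']
  constructor
  · intro h
    have le_two : ∀ k : ℕ, (k : ℝ) ^ p ≤ 2 ^ p → k ≤ 2 := fun k hk => by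
      exact_mod_cast (Real.rpow_le_rpow_iff k.cast_nonneg zero_le_two hp0).1 hk
    have pos : ∀ k : ℕ, 0 < k → 0 < (k : ℝ) ^ p := fun k hk =>
      Real.rpow_pos_of_pos (by exact_mod_cast hk) p
    have hm0 : 0 ≤ (m : ℝ) ^ p := by positivity
    have hn0 : 0 ≤ (n : ℝ) ^ p := by positivity
    have hm2 := le_two m (by linarith)
    have hn2 := le_two n (by linarith)
    have hmn : m = 2 → n = 0 := by
      rintro rfl
      by_contra hn
      have := pos n (by omega)
      push_cast at h
      linarith
    have hnm : n = 2 → m = 0 := by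
      rintro rfl
      by_contra hm
      have := pos m (by omega)
      push_cast at h
      linarith
    omega
  · intro h
    have two_le : (2 : ℝ) ≤ 2 ^ p := Real.self_le_rpow_of_one_le one_le_two hp
    have hm2 : m ≤ 2 := by omega
    have hn2 : n ≤ 2 := by omega
    interval_cases m <;> interval_cases n <;> first
      | omega
      | (simp only [Nat.cast_zero, Nat.cast_one, Nat.cast_ofNat, Real.zero_rpow hp0.ne',
          Real.one_rpow]
         linarith)

/-- The lattice `Λ = {(x,y) ∈ ℤ² : 13 ∣ x + 5y}` is a linear `2`-perfect code in `ℤ²` in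
the `ℓ_p` metric for every real `1 ≤ p < ∞`: the translates of
`B_p²(2) = {x ∈ ℤ² : |x₁|^p + |x₂|^p ≤ 2^p}` by elements of `Λ` partition `ℤ²`. -/
theorem perfect_code_13 (p : ℝ) (hp : 1 ≤ p) :
    ∀ z : ℤ × ℤ, ∃! c : ℤ × ℤ, ((13 : ℤ) ∣ c.1 + 5 * c.2) ∧
      (|z.1 - c.1| : ℝ) ^ p + (|z.2 - c.2| : ℝ) ^ p ≤ 2 ^ p := by
  rintro ⟨x, y⟩
  simp only [← Int.cast_sub, abs_rpow_add_abs_rpow_le_two_rpow_iff hp]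
  have exists_rep : ∃ a b : ℤ, |a| + |b| ≤ 2 ∧ 13 ∣ (x - a) + 5 * (y - b) := by
    have hs : ∀ s : ℤ, 0 ≤ s → s < 13 → ∃ a ∈ Finset.Icc (-2 : ℤ) 2,
        ∃ b ∈ Finset.Icc (-2 : ℤ) 2, |a| + |b| ≤ 2 ∧ 13 ∣ s - (a + 5 * b) := by
      intro s h0 h1
      interval_cases s <;> decide
    obtain ⟨a, -, b, -, hab, hd⟩ := hs ((x + 5 * y) % 13) (by omega) (by omega)
    exact ⟨a, b, hab, by omega⟩
  obtain ⟨a, b, hab, hd⟩ := exists_rep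
  refine ⟨(x - a, y - b), ⟨hd, by simpa using hab⟩, ?_⟩
  rintro ⟨u, v⟩ ⟨huv, hle⟩
  simp only at huv hle
  obtain ⟨c, rfl⟩ : ∃ c, u = x - c := ⟨x - u, by ring⟩
  obtain ⟨d, rfl⟩ : ∃ d, v = y - d := ⟨y - v, by ring⟩
  simp only [sub_sub_cancel] at hle
  have hdvd : (13 : ℤ) ∣ (a - c) + 5 * (b - d) := by omega
  have ball_inj : ∀ a ∈ Finset.Icc (-2 : ℤ) 2, ∀ b ∈ Finset.Icc (-2 : ℤ) 2, |a| + |b| ≤ 2 →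
      ∀ c ∈ Finset.Icc (-2 : ℤ) 2, ∀ d ∈ Finset.Icc (-2 : ℤ) 2, |c| + |d| ≤ 2 →
      13 ∣ (a - c) + 5 * (b - d) → a = c ∧ b = d := by
    decide
  have mem_Icc : ∀ s t : ℤ, |s| + |t| ≤ 2 →
      s ∈ Finset.Icc (-2 : ℤ) 2 ∧ t ∈ Finset.Icc (-2 : ℤ) 2 := fun s t h => by
    have hs := abs_le.1 (show |s| ≤ 2 by linarith [abs_nonneg t])
    have ht := abs_le.1 (show |t| ≤ 2 by linarith [abs_nonneg s])
    exact ⟨Finset.mem_Icc.2 hs, Finset.mem_Icc.2 ht⟩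
  obtain ⟨ha, hb⟩ := mem_Icc a b hab
  obtain ⟨hc, hd'⟩ := mem_Icc c d hle
  obtain ⟨rfl, rfl⟩ := ball_inj a ha b hb hab c hc d hd' hle hdvd
  rfl
end

section
/- Let Λ = {(x, y, z) ∈ ℤ³ : x + 3y + 9z ≡ 0 (mod 27)}. Then the ℓ_2 ball B₂³(√3) = {x ∈ ℤ³ : x₁² + x₂² + x₃² ≤ 3} equals the cube {−1, 0, 1}³, and the translates c + B₂³(√3), c ∈ Λ, partition ℤ³; that is, Λ is a linear √3-perfect code in ℤ³ in the ℓ_2 metric (equivalently, a 1-perfect code in the ℓ_∞ metric). -/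
theorem sq_add_sq_add_sq_le_three_iff (a b c : ℤ) :
    a ^ 2 + b ^ 2 + c ^ 2 ≤ 3 ↔ |a| ≤ 1 ∧ |b| ≤ 1 ∧ |c| ≤ 1 := by
  simp only [abs_le]
  constructor
  · intro h
    refine ⟨⟨?_, ?_⟩, ⟨?_, ?_⟩, ⟨?_, ?_⟩⟩ <;>
      nlinarith [sq_nonneg a, sq_nonneg b, sq_nonneg c]
  · rintro ⟨⟨ha, ha'⟩, ⟨hb, hb'⟩, ⟨hc, hc'⟩⟩
    nlinarith

/-- Existence of a balanced ternary expansion with three digits modulo `27`. -/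
theorem exists_balanced_ternary (s : ℤ) :
    ∃ a b c : ℤ, (|a| ≤ 1 ∧ |b| ≤ 1 ∧ |c| ≤ 1) ∧ 27 ∣ s - (a + 3 * b + 9 * c) := by
  simp only [abs_le]
  refine ⟨(s + 1) % 3 - 1, ((s + 1) / 3 + 1) % 3 - 1, (((s + 1) / 3 + 1) / 3 + 1) % 3 - 1, ?_⟩
  omega

/-- The `ℓ_2` ball `B₂³(√3)` in `ℤ³` is the cube `{−1,0,1}³`, and the lattice
`Λ = {(x,y,z) ∈ ℤ³ : 27 ∣ x + 3y + 9z}` is a linear `√3`-perfect code in `ℤ³` in the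
`ℓ_2` metric (equivalently, a `1`-perfect code in the `ℓ_∞` metric): the translates of
`B₂³(√3)` by elements of `Λ` partition `ℤ³`. -/
theorem perfect_code_27 :
    ({x : Fin 3 → ℤ | (x 0) ^ 2 + (x 1) ^ 2 + (x 2) ^ 2 ≤ 3} =
      {x : Fin 3 → ℤ | ∀ i, |x i| ≤ 1}) ∧
    ∀ z : Fin 3 → ℤ, ∃! c : Fin 3 → ℤ,
      ((27 : ℤ) ∣ c 0 + 3 * c 1 + 9 * c 2) ∧
      (z 0 - c 0) ^ 2 + (z 1 - c 1) ^ 2 + (z 2 - c 2) ^ 2 ≤ 3 := by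
  refine ⟨?_, fun z => ?_⟩
  · ext x
    simp only [Set.mem_ofPred_eq, sq_add_sq_add_sq_le_three_iff, Fin.forall_fin_succ]
    simp
  · simp only [sq_add_sq_add_sq_le_three_iff]
    obtain ⟨a, b, c, habc, hdvd⟩ := exists_balanced_ternary (z 0 + 3 * z 1 + 9 * z 2)
    refine ⟨![z 0 - a, z 1 - b, z 2 - c], ?_, ?_⟩
    · simp only [Matrix.cons_val, sub_sub_cancel]
      exact ⟨by omega, habc⟩
    · rintro y ⟨hy, hball⟩
      simp only [abs_le] at habc hball
      ext i
      fin_cases i <;> simp only [Fin.zero_eta, Fin.mk_one, Fin.reduceFinMk, Matrix.cons_val] <;>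
        omega
end
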